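/- Let k be a field and let A and B be unital associative k-algebras. Then for every n ≥ 0 there is an isomorphism of k-vector spaces H_n(C^red_•(A ⊗_k B)) ≅ ⊕_{p+q=n} H_p(C^red_•(A)) ⊗_k H_q(C^red_•(B)); that is, the Hochschild homology of A ⊗_k B satisfies the Künneth formula HH_n(A ⊗_k B) ≅ ⊕_{p+q=n} HH_p(A) ⊗_k HH_q(B). -/

import Mathlib

/-!
The Hochschild chain complex of `A` is `A ⊗_{Aᵉ} P`, where `P` is the reduced bar resolution of the
bimodule `A` over the enveloping algebra `Aᵉ = A ⊗ Aᵒᵖ`, with generators `Ā^{⊗n}` in degree `n`.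
Since `(A ⊗ B)ᵉ ≃ Aᵉ ⊗ Bᵉ`, the tensor product of the bar resolutions of `A` and `B` is a free
resolution of `A ⊗ B` over `(A ⊗ B)ᵉ`, hence homotopy equivalent to the bar resolution of `A ⊗ B`.
Extending scalars along this equivalence shows that the Hochschild complex of `A ⊗ B` is homotopy
equivalent to the tensor product of the Hochschild complexes of `A` and `B`. Over a field every
complex is homotopy equivalent to its homology with zero differential, so the homology of a tensor
product of complexes is the tensor product of their homologies.
-/

open scoped TensorProduct
open PiTensorProduct

universe u

/-- `Ā = A / (k · 1_A)`, the underlying `k`-vector space of `A` modulo scalars. -/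
abbrev RedQuot (k : Type u) [Field k] (A : Type u) [Ring A] [Algebra k A] :=
  A ⧸ (Submodule.span k {(1 : A)})

/-- The canonical projection `A → Ā`. -/
def redPr (k : Type u) [Field k] (A : Type u) [Ring A] [Algebra k A] :
    A →ₗ[k] RedQuot k A :=
  Submodule.mkQ _

/-- The reduced Hochschild chains `C^red_n(A) = A ⊗ Ā^{⊗n}` (tensor products over `k`). -/
abbrev CRed (k : Type u) [Field k] (A : Type u) [Ring A] [Algebra k A] (n : ℕ) :=
  A ⊗[k] (⨂[k]^n (RedQuot k A))

/-- The unreduced Hochschild chains `C_n(A) = A ⊗ A^{⊗n}` (tensor products over `k`). -/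
abbrev CUn (k : Type u) [Field k] (A : Type u) [Ring A] [Algebra k A] (n : ℕ) :=
  A ⊗[k] (⨂[k]^n A)

variable (k : Type u) [Field k]

/-- The property of being the Hochschild differential of the reduced Hochschild complex
`C^red_•(A)`:
`b(a₀ ⊗ a₁ ⊗ ⋯ ⊗ aₘ) = ∑_{i=0}^{m-1} (-1)^i a₀ ⊗ ⋯ ⊗ aᵢ·aᵢ₊₁ ⊗ ⋯ ⊗ aₘ
  + (-1)^m aₘ·a₀ ⊗ a₁ ⊗ ⋯ ⊗ a_{m-1}`,
required for all lifts `a` of the classes in `Ā`; this quantification over lifts encodes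
exactly the well-definedness of the descent of `b` to the reduced complex. -/
def IsRedHochschildDiff (A : Type u) [Ring A] [Algebra k A]
    (b : ∀ n : ℕ, CRed k A (n + 1) →ₗ[k] CRed k A n) : Prop :=
  ∀ (n : ℕ) (x₀ : A) (a : Fin (n + 1) → A),
    b n (x₀ ⊗ₜ[k] tprod k (fun j => redPr k A (a j))) =
      (x₀ * a 0) ⊗ₜ[k] tprod k (fun j : Fin n => redPr k A (a j.succ))
      + (∑ i : Fin n, ((-1 : k) ^ ((i : ℕ) + 1)) •
          (x₀ ⊗ₜ[k] tprod k (fun j : Fin n => redPr k A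
            (if (j : ℕ) < (i : ℕ) then a j.castSucc
             else if (j : ℕ) = (i : ℕ) then a i.castSucc * a i.succ
             else a j.succ))))
      + ((-1 : k) ^ (n + 1)) •
          ((a (Fin.last n) * x₀) ⊗ₜ[k] tprod k (fun j : Fin n => redPr k A (a j.castSucc)))

/-- The property of being the Connes operator `B` of the reduced Hochschild complex:
`B(a₀ ⊗ ⋯ ⊗ aₙ) = ∑_{i=0}^{n} (-1)^{n·i} 1 ⊗ aᵢ ⊗ ⋯ ⊗ aₙ ⊗ a₀ ⊗ ⋯ ⊗ a_{i-1}`,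
again required for all lifts. -/
def IsConnesOp (A : Type u) [Ring A] [Algebra k A]
    (Bop : ∀ n : ℕ, CRed k A n →ₗ[k] CRed k A (n + 1)) : Prop :=
  ∀ (n : ℕ) (x₀ : A) (a : Fin n → A),
    Bop n (x₀ ⊗ₜ[k] tprod k (fun j => redPr k A (a j))) =
      ∑ i : Fin (n + 1), ((-1 : k) ^ (n * (i : ℕ))) •
        ((1 : A) ⊗ₜ[k] tprod k (fun j : Fin (n + 1) =>
          redPr k A ((Fin.cons x₀ a : Fin (n + 1) → A) (i + j))))

/-- Cycles of an `ℕ`-indexed chain complex (with `d n : M (n+1) → M n`):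
everything in degree `0`, and `ker (d n)` in degree `n + 1`. -/
def cyclesOf {M : ℕ → Type u} [∀ n, AddCommGroup (M n)] [∀ n, Module k (M n)]
    (d : ∀ n : ℕ, M (n + 1) →ₗ[k] M n) : ∀ n : ℕ, Submodule k (M n)
  | 0 => ⊤
  | (n + 1) => LinearMap.ker (d n)

/-- Homology of an `ℕ`-indexed chain complex in degree `n`:
`H_n = cycles_n / (boundaries_n ∩ cycles_n)`. -/
abbrev homologyOf {M : ℕ → Type u} [∀ n, AddCommGroup (M n)] [∀ n, Module k (M n)]
    (d : ∀ n : ℕ, M (n + 1) →ₗ[k] M n) (n : ℕ) :=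
  cyclesOf k d n ⧸ (LinearMap.range (d n)).comap (cyclesOf k d n).subtype

namespace HochschildKunneth

noncomputable section

open DirectSum Finset MulOpposite

/-! ### Chain complexes and homotopies -/

section Complex

variable {R : Type*} [Ring R] {C C' D : ℕ → Type*}
  [∀ n, AddCommGroup (C n)] [∀ n, Module R (C n)] [∀ n, AddCommGroup (C' n)] [∀ n, Module R (C' n)]
  [∀ n, AddCommGroup (D n)] [∀ n, Module R (D n)]

/-- Degreewise linear maps commuting with the differentials. -/
def IsChainMap (dC : ∀ n, C (n + 1) →ₗ[R] C n) (dD : ∀ n, D (n + 1) →ₗ[R] D n)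
    (f : ∀ n, C n →ₗ[R] D n) : Prop :=
  ∀ n x, dD n (f (n + 1) x) = f n (dC n x)

lemma IsChainMap.comp {dC : ∀ n, C (n + 1) →ₗ[R] C n} {dC' : ∀ n, C' (n + 1) →ₗ[R] C' n}
    {dD : ∀ n, D (n + 1) →ₗ[R] D n} {f : ∀ n, C n →ₗ[R] C' n} {g : ∀ n, C' n →ₗ[R] D n}
    (hf : IsChainMap dC dC' f) (hg : IsChainMap dC' dD g) :
    IsChainMap dC dD fun n => g n ∘ₗ f n :=
  fun n x => (hg n (f (n + 1) x)).trans (congrArg (g n) (hf n x))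

/-- `h` is a chain homotopy between the endomorphism `π` and the identity: `d h + h d + π = 1`. -/
structure IsHomotopy (d : ∀ n, C (n + 1) →ₗ[R] C n) (h : ∀ n, C n →ₗ[R] C (n + 1))
    (π : ∀ n, C n →ₗ[R] C n) : Prop where
  zero : ∀ x, d 0 (h 0 x) + π 0 x = x
  succ : ∀ n x, d (n + 1) (h (n + 1) x) + h n (d n x) + π (n + 1) x = x

namespace IsHomotopy

variable {d : ∀ n, C (n + 1) →ₗ[R] C n} {h : ∀ n, C n →ₗ[R] C (n + 1)} {π : ∀ n, C n →ₗ[R] C n}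

lemma d_h_zero (H : IsHomotopy d h π) (x : C 0) : d 0 (h 0 x) = x - π 0 x :=
  eq_sub_of_add_eq (H.zero x)

lemma d_h_succ (H : IsHomotopy d h π) (n : ℕ) (x : C (n + 1)) :
    d (n + 1) (h (n + 1) x) = x - π (n + 1) x - h n (d n x) :=
  eq_sub_of_add_eq (eq_sub_of_add_eq (H.succ n x))

end IsHomotopy

lemma isHomotopy_zero (d : ∀ n, C (n + 1) →ₗ[R] C n) {π : ∀ n, C n →ₗ[R] C n}
    (hπ : ∀ n x, π n x = x) : IsHomotopy d 0 π where
  zero x := by simp [hπ]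
  succ n x := by simp [hπ]

/-- A chain homotopy equivalence: chain maps in both directions with both composites homotopic to
the identity. -/
structure HomotopyEquiv (dC : ∀ n, C (n + 1) →ₗ[R] C n) (dD : ∀ n, D (n + 1) →ₗ[R] D n) where
  hom : ∀ n, C n →ₗ[R] D n
  inv : ∀ n, D n →ₗ[R] C n
  isChainMap_hom : IsChainMap dC dD hom
  isChainMap_inv : IsChainMap dD dC inv
  leftHomotopy : ∀ n, C n →ₗ[R] C (n + 1)
  isHomotopy_left : IsHomotopy dC leftHomotopy fun n => inv n ∘ₗ hom n
  rightHomotopy : ∀ n, D n →ₗ[R] D (n + 1)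
  isHomotopy_right : IsHomotopy dD rightHomotopy fun n => hom n ∘ₗ inv n

/-- Isomorphic complexes are homotopy equivalent. -/
def HomotopyEquiv.ofLinearEquiv {dC : ∀ n, C (n + 1) →ₗ[R] C n} {dD : ∀ n, D (n + 1) →ₗ[R] D n}
    (e : ∀ n, C n ≃ₗ[R] D n) (he : ∀ n x, dD n (e (n + 1) x) = e n (dC n x)) :
    HomotopyEquiv dC dD where
  hom n := e n
  inv n := (e n).symm
  isChainMap_hom := he
  isChainMap_inv n y := (e n).injective <| by
    simpa using (he n ((e (n + 1)).symm y)).symm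
  leftHomotopy := 0
  isHomotopy_left := isHomotopy_zero dC (by simp)
  rightHomotopy := 0
  isHomotopy_right := isHomotopy_zero dD (by simp)

end Complex

/-! ### Tensor products of complexes -/

section Tensor

variable {R : Type*} [CommRing R] {C C' D D' : ℕ → Type*}
  [∀ n, AddCommGroup (C n)] [∀ n, Module R (C n)] [∀ n, AddCommGroup (C' n)] [∀ n, Module R (C' n)]
  [∀ n, AddCommGroup (D n)] [∀ n, Module R (D n)] [∀ n, AddCommGroup (D' n)] [∀ n, Module R (D' n)]

variable (R C D) in
/-- The degree `n` part `⨁_{p+q=n} C p ⊗ D q` of the tensor product of two graded modules. -/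
abbrev Tot (n : ℕ) : Type _ := ⨁ i : antidiagonal n, C i.1.1 ⊗[R] D i.1.2

namespace Tot

variable (R C D) in
/-- The inclusion of the summand `C p ⊗ D q` in total degree `n = p + q`. -/
def ι {p q n : ℕ} (h : p + q = n) : C p ⊗[R] D q →ₗ[R] Tot R C D n :=
  lof R (antidiagonal n) (fun i => C i.1.1 ⊗[R] D i.1.2) ⟨(p, q), mem_antidiagonal.2 h⟩

lemma hom_ext {M : Type*} [AddCommGroup M] [Module R M] {n : ℕ} {f g : Tot R C D n →ₗ[R] M}
    (H : ∀ p q (h : p + q = n) x y, f (ι R C D h (x ⊗ₜ y)) = g (ι R C D h (x ⊗ₜ y))) : f = g :=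
  DirectSum.linearMap_ext R fun ⟨⟨p, q⟩, h⟩ =>
    TensorProduct.ext' fun x y => H p q (mem_antidiagonal.1 h) x y

variable (C D) in
/-- The horizontal part `d ⊗ 1` of the total differential, with `d = 0` on `C 0`. -/
def horizontal (dC : ∀ n, C (n + 1) →ₗ[R] C n) :
    ∀ p q n : ℕ, p + q = n + 1 → (C p ⊗[R] D q →ₗ[R] Tot R C D n)
  | 0, _, _, _ => 0
  | p + 1, q, n, h => ι R C D (show p + q = n by omega) ∘ₗ (dC p).rTensor (D q)

variable (C D) in
/-- The vertical part `(-1)^p ⊗ d` of the total differential, with `d = 0` on `D 0`. -/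
def vertical (dD : ∀ n, D (n + 1) →ₗ[R] D n) :
    ∀ p q n : ℕ, p + q = n + 1 → (C p ⊗[R] D q →ₗ[R] Tot R C D n)
  | _, 0, _, _ => 0
  | p, q + 1, n, h => (-1 : R) ^ p • (ι R C D (show p + q = n by omega) ∘ₗ (dD q).lTensor (C p))

/-- The differential `x ⊗ y ↦ d x ⊗ y + (-1)^|x| x ⊗ d y` of the tensor product complex. -/
def d (dC : ∀ n, C (n + 1) →ₗ[R] C n) (dD : ∀ n, D (n + 1) →ₗ[R] D n) (n : ℕ) :
    Tot R C D (n + 1) →ₗ[R] Tot R C D n :=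
  toModule R (antidiagonal (n + 1)) _ fun i =>
    horizontal C D dC i.1.1 i.1.2 n (mem_antidiagonal.1 i.2) +
      vertical C D dD i.1.1 i.1.2 n (mem_antidiagonal.1 i.2)

/-- The tensor product of two degree-preserving maps. -/
def map (f : ∀ n, C n →ₗ[R] C' n) (g : ∀ n, D n →ₗ[R] D' n) (n : ℕ) :
    Tot R C D n →ₗ[R] Tot R C' D' n :=
  DirectSum.lmap fun i => TensorProduct.map (f i.1.1) (g i.1.2)

@[simp] lemma map_ι (f : ∀ n, C n →ₗ[R] C' n) (g : ∀ n, D n →ₗ[R] D' n) {p q n : ℕ}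
    (h : p + q = n) (x : C p) (y : D q) :
    map f g n (ι R C D h (x ⊗ₜ y)) = ι R C' D' h (f p x ⊗ₜ g q y) := by
  rw [map, ι, lmap_lof]; rfl

/-- The homotopy `x ⊗ y ↦ h x ⊗ y + (-1)^|x| π x ⊗ h' y` on a tensor product of complexes. -/
def homotopy (h : ∀ n, C n →ₗ[R] C (n + 1)) (π : ∀ n, C n →ₗ[R] C n)
    (h' : ∀ n, D n →ₗ[R] D (n + 1)) (n : ℕ) : Tot R C D n →ₗ[R] Tot R C D (n + 1) :=
  toModule R (antidiagonal n) _ fun i =>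
    ι R C D (show i.1.1 + 1 + i.1.2 = n + 1 by have := mem_antidiagonal.1 i.2; omega) ∘ₗ
      (h i.1.1).rTensor (D i.1.2) +
    (-1 : R) ^ i.1.1 •
      (ι R C D (show i.1.1 + (i.1.2 + 1) = n + 1 by have := mem_antidiagonal.1 i.2; omega) ∘ₗ
        TensorProduct.map (π i.1.1) (h' i.1.2))

@[simp] lemma homotopy_ι (h : ∀ n, C n →ₗ[R] C (n + 1)) (π : ∀ n, C n →ₗ[R] C n)
    (h' : ∀ n, D n →ₗ[R] D (n + 1)) {p q n : ℕ} (e : p + q = n) (x : C p) (y : D q) :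
    homotopy h π h' n (ι R C D e (x ⊗ₜ y)) =
      ι R C D (show p + 1 + q = n + 1 by omega) (h p x ⊗ₜ y) +
      (-1 : R) ^ p • ι R C D (show p + (q + 1) = n + 1 by omega) (π p x ⊗ₜ h' q y) := by
  rw [homotopy, ι, toModule_lof]; rfl

section Differential

variable (dC : ∀ n, C (n + 1) →ₗ[R] C n) (dD : ∀ n, D (n + 1) →ₗ[R] D n)

lemma d_ι {p q n : ℕ} (h : p + q = n + 1) (z : C p ⊗[R] D q) :
    d dC dD n (ι R C D h z) = horizontal C D dC p q n h z + vertical C D dD p q n h z := by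
  rw [d, ι, toModule_lof]; rfl

@[simp] lemma d_ι_succ_succ {p q n : ℕ} (h : p + 1 + (q + 1) = n + 1) (x : C (p + 1))
    (y : D (q + 1)) :
    d dC dD n (ι R C D h (x ⊗ₜ y)) =
      ι R C D (show p + (q + 1) = n by omega) (dC p x ⊗ₜ y) +
      (-1 : R) ^ (p + 1) • ι R C D (show p + 1 + q = n by omega) (x ⊗ₜ dD q y) := by
  rw [d_ι]; rfl

@[simp] lemma d_ι_succ_zero {p n : ℕ} (h : p + 1 + 0 = n + 1) (x : C (p + 1)) (y : D 0) :
    d dC dD n (ι R C D h (x ⊗ₜ y)) = ι R C D (show p + 0 = n by omega) (dC p x ⊗ₜ y) := by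
  simp [d_ι, horizontal, vertical]

@[simp] lemma d_ι_zero_succ {q n : ℕ} (h : 0 + (q + 1) = n + 1) (x : C 0) (y : D (q + 1)) :
    d dC dD n (ι R C D h (x ⊗ₜ y)) = ι R C D (show 0 + q = n by omega) (x ⊗ₜ dD q y) := by
  simp [d_ι, horizontal, vertical]

lemma d_zero_zero (n : ℕ) : d (R := R) (C := C) (D := D) 0 0 n = 0 := by
  refine hom_ext fun p q h x y => ?_
  rcases p with _ | p <;> rcases q with _ | q
  · omega
  all_goals simp

lemma d_d (hC : ∀ n x, dC n (dC (n + 1) x) = 0) (hD : ∀ n x, dD n (dD (n + 1) x) = 0)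
    (n : ℕ) (z : Tot R C D (n + 1 + 1)) : d dC dD n (d dC dD (n + 1) z) = 0 := by
  suffices d dC dD n ∘ₗ d dC dD (n + 1) = 0 from LinearMap.congr_fun this z
  refine hom_ext fun p q h x y => ?_
  rcases p with _ | _ | p <;> rcases q with _ | _ | q <;> try omega
  all_goals simp only [LinearMap.comp_apply, LinearMap.zero_apply, d_ι_succ_succ, d_ι_succ_zero,
    d_ι_zero_succ, map_add, map_smul, hC, hD, TensorProduct.zero_tmul, TensorProduct.tmul_zero,
    map_zero]
  all_goals module

end Differential

variable {dC : ∀ n, C (n + 1) →ₗ[R] C n} {dD : ∀ n, D (n + 1) →ₗ[R] D n}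

lemma isChainMap_map {dC' : ∀ n, C' (n + 1) →ₗ[R] C' n} {dD' : ∀ n, D' (n + 1) →ₗ[R] D' n}
    {f : ∀ n, C n →ₗ[R] C' n} {g : ∀ n, D n →ₗ[R] D' n} (hf : IsChainMap dC dC' f)
    (hg : IsChainMap dD dD' g) : IsChainMap (d dC dD) (d dC' dD') (map f g) := by
  intro n z
  suffices d dC' dD' n ∘ₗ map f g (n + 1) = map f g n ∘ₗ d dC dD n from LinearMap.congr_fun this z
  refine hom_ext fun p q h x y => ?_
  rcases p with _ | p <;> rcases q with _ | q
  · omega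
  all_goals simp [hf _ _, hg _ _]

lemma map_comp {C'' D'' : ℕ → Type*} [∀ n, AddCommGroup (C'' n)] [∀ n, Module R (C'' n)]
    [∀ n, AddCommGroup (D'' n)] [∀ n, Module R (D'' n)] (f : ∀ n, C n →ₗ[R] C' n)
    (g : ∀ n, D n →ₗ[R] D' n) (f' : ∀ n, C' n →ₗ[R] C'' n) (g' : ∀ n, D' n →ₗ[R] D'' n) (n : ℕ) :
    map f' g' n ∘ₗ map f g n = map (fun n => f' n ∘ₗ f n) (fun n => g' n ∘ₗ g n) n :=
  hom_ext fun p q h x y => by simp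

/-- Summing the two homotopies bihomogeneously,
`(1 - π) ⊗ 1 + π ⊗ (1 - π') = 1 - π ⊗ π'`; the cross terms cancel because `π` is a chain map. -/
lemma isHomotopy_homotopy {h : ∀ n, C n →ₗ[R] C (n + 1)} {π : ∀ n, C n →ₗ[R] C n}
    {h' : ∀ n, D n →ₗ[R] D (n + 1)} {π' : ∀ n, D n →ₗ[R] D n} (hπ : IsChainMap dC dC π)
    (HC : IsHomotopy dC h π) (HD : IsHomotopy dD h' π') :
    IsHomotopy (d dC dD) (homotopy h π h') (map π π') where
  zero := by
    suffices d dC dD 0 ∘ₗ homotopy h π h' 0 + map π π' 0 = LinearMap.id from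
      LinearMap.congr_fun this
    refine hom_ext fun p q e x y => ?_
    obtain ⟨rfl, rfl⟩ : p = 0 ∧ q = 0 := by omega
    simp only [LinearMap.add_apply, LinearMap.comp_apply, LinearMap.id_apply, homotopy_ι, map_ι,
      map_add, map_smul, map_sub, d_ι_succ_zero, d_ι_zero_succ, HC.d_h_zero, HD.d_h_zero,
      TensorProduct.sub_tmul, TensorProduct.tmul_sub]
    module
  succ n := by
    suffices d dC dD (n + 1) ∘ₗ homotopy h π h' (n + 1) + homotopy h π h' n ∘ₗ d dC dD n
        + map π π' (n + 1) = LinearMap.id from LinearMap.congr_fun this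
    refine hom_ext fun p q e x y => ?_
    have sign : (-1 : R) ^ p * (-1) ^ p = 1 := by simp [← mul_pow]
    rcases p with _ | p <;> rcases q with _ | q
    · omega
    all_goals
      simp only [LinearMap.add_apply, LinearMap.comp_apply, LinearMap.id_apply, homotopy_ι, map_ι,
        map_add, map_smul, map_sub, smul_add, smul_sub, smul_smul, sign, d_ι_succ_succ,
        d_ι_succ_zero, d_ι_zero_succ, hπ _ _, HC.d_h_zero, HC.d_h_succ, HD.d_h_zero, HD.d_h_succ,
        TensorProduct.sub_tmul, TensorProduct.tmul_sub]
      module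

variable (C D) in
/-- In degree `0` the tensor product of two graded modules is `C 0 ⊗ D 0`. -/
def zeroEquiv : Tot R C D 0 ≃ₗ[R] C 0 ⊗[R] D 0 :=
  let i₀ : antidiagonal 0 := ⟨(0, 0), by simp⟩
  have component_ι (x : C 0 ⊗[R] D 0) : DirectSum.component R (antidiagonal 0)
      (fun i => C i.1.1 ⊗[R] D i.1.2) i₀ (ι R C D rfl x) = x :=
    DirectSum.component.lof_self R (M := fun i : antidiagonal 0 => C i.1.1 ⊗[R] D i.1.2) i₀ x
  LinearEquiv.ofLinearMap (DirectSum.component R (antidiagonal 0) _ i₀) (ι R C D rfl)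
    (LinearMap.ext component_ι)
    (hom_ext fun p q h x y => by
      obtain ⟨rfl, rfl⟩ : p = 0 ∧ q = 0 := by omega
      exact congrArg (ι R C D rfl) (component_ι (x ⊗ₜ y)))

lemma zeroEquiv_map (f : ∀ n, C n →ₗ[R] C' n) (g : ∀ n, D n →ₗ[R] D' n) (z : Tot R C D 0) :
    zeroEquiv C' D' (map f g 0 z) = TensorProduct.map (f 0) (g 0) (zeroEquiv C D z) := by
  obtain ⟨x, rfl⟩ := (zeroEquiv C D).symm.surjective z
  rw [LinearEquiv.apply_symm_apply]
  apply (zeroEquiv C' D').symm.injective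
  rw [LinearEquiv.symm_apply_apply]
  suffices map f g 0 ∘ₗ ι R C D rfl = ι R C' D' rfl ∘ₗ TensorProduct.map (f 0) (g 0) from
    LinearMap.congr_fun this x
  exact TensorProduct.ext' fun x y => map_ι f g rfl x y

@[simp] lemma zeroEquiv_ι (h : 0 + 0 = 0) (x : C 0 ⊗[R] D 0) :
    zeroEquiv C D (ι R C D h x) = x :=
  (zeroEquiv C D).apply_symm_apply x

lemma map_zeroEquiv_d {M M' : Type*} [AddCommGroup M] [Module R M] [AddCommGroup M'] [Module R M']
    {dC : ∀ n, C (n + 1) →ₗ[R] C n} {dD : ∀ n, D (n + 1) →ₗ[R] D n} {f : C 0 →ₗ[R] M}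
    {g : D 0 →ₗ[R] M'} (hf : ∀ x, f (dC 0 x) = 0) (hg : ∀ y, g (dD 0 y) = 0)
    (z : Tot R C D (0 + 1)) : TensorProduct.map f g (zeroEquiv C D (d dC dD 0 z)) = 0 := by
  suffices TensorProduct.map f g ∘ₗ (zeroEquiv C D).toLinearMap ∘ₗ d dC dD 0 = 0 from
    LinearMap.congr_fun this z
  refine hom_ext fun p q h x y => ?_
  obtain ⟨rfl, rfl⟩ | ⟨rfl, rfl⟩ : p = 0 ∧ q = 0 + 1 ∨ p = 0 + 1 ∧ q = 0 := by omega
  all_goals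
    rw [LinearMap.comp_apply, LinearMap.comp_apply]
    simp [hf, hg]

end Tot

/-- The tensor product of two chain homotopy equivalences. -/
def HomotopyEquiv.tensor {dC : ∀ n, C (n + 1) →ₗ[R] C n} {dC' : ∀ n, C' (n + 1) →ₗ[R] C' n}
    {dD : ∀ n, D (n + 1) →ₗ[R] D n} {dD' : ∀ n, D' (n + 1) →ₗ[R] D' n}
    (e : HomotopyEquiv dC dC') (e' : HomotopyEquiv dD dD') :
    HomotopyEquiv (Tot.d dC dD) (Tot.d dC' dD') where
  hom := Tot.map e.hom e'.hom
  inv := Tot.map e.inv e'.inv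
  isChainMap_hom := Tot.isChainMap_map e.isChainMap_hom e'.isChainMap_hom
  isChainMap_inv := Tot.isChainMap_map e.isChainMap_inv e'.isChainMap_inv
  leftHomotopy := Tot.homotopy e.leftHomotopy (fun n => e.inv n ∘ₗ e.hom n) e'.leftHomotopy
  isHomotopy_left := by
    simpa only [Tot.map_comp] using Tot.isHomotopy_homotopy
      (e.isChainMap_hom.comp e.isChainMap_inv) e.isHomotopy_left e'.isHomotopy_left
  rightHomotopy := Tot.homotopy e.rightHomotopy (fun n => e.hom n ∘ₗ e.inv n) e'.rightHomotopy
  isHomotopy_right := by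
    simpa only [Tot.map_comp] using Tot.isHomotopy_homotopy
      (e.isChainMap_inv.comp e.isChainMap_hom) e.isHomotopy_right e'.isHomotopy_right

end Tensor

/-! ### The Künneth formula over a field -/

section Kunneth

variable {k} {C D : ℕ → Type u} [∀ n, AddCommGroup (C n)] [∀ n, Module k (C n)]
  [∀ n, AddCommGroup (D n)] [∀ n, Module k (D n)]
  {dC : ∀ n, C (n + 1) →ₗ[k] C n} {dD : ∀ n, D (n + 1) →ₗ[k] D n}

lemma IsChainMap.mem_cyclesOf {f : ∀ n, C n →ₗ[k] D n} (hf : IsChainMap dC dD f) :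
    ∀ n, ∀ x ∈ cyclesOf k dC n, f n x ∈ cyclesOf k dD n
  | 0, _, _ => trivial
  | n + 1, x, hx => (hf n x).trans <| by rw [show dC n x = 0 from hx, map_zero]

/-- The map induced on homology by a chain map. -/
def homologyMap {f : ∀ n, C n →ₗ[k] D n} (hf : IsChainMap dC dD f) (n : ℕ) :
    homologyOf k dC n →ₗ[k] homologyOf k dD n :=
  Submodule.mapQ _ _ ((f n).restrict (hf.mem_cyclesOf n)) <| by
    rintro _ ⟨y, hy⟩
    exact ⟨f (n + 1) y, (hf n y).trans (congrArg (f n) hy)⟩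

lemma IsHomotopy.sub_mem_range {h : ∀ n, C n →ₗ[k] C (n + 1)} {π : ∀ n, C n →ₗ[k] C n}
    (H : IsHomotopy dC h π) : ∀ n, ∀ x ∈ cyclesOf k dC n, π n x - x ∈ LinearMap.range (dC n)
  | 0, x, _ => ⟨-h 0 x, by rw [map_neg, H.d_h_zero, neg_sub]⟩
  | n + 1, x, hx => ⟨-h (n + 1) x, by
      rw [map_neg, H.d_h_succ, show dC n x = 0 from hx, map_zero, sub_zero, neg_sub]⟩

lemma homologyMap_homologyMap {f : ∀ n, C n →ₗ[k] D n} {g : ∀ n, D n →ₗ[k] C n}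
    (hf : IsChainMap dC dD f) (hg : IsChainMap dD dC g) {h : ∀ n, C n →ₗ[k] C (n + 1)}
    (H : IsHomotopy dC h fun n => g n ∘ₗ f n) (n : ℕ) (z : homologyOf k dC n) :
    homologyMap hg n (homologyMap hf n z) = z := by
  obtain ⟨⟨x, hx⟩, rfl⟩ := Submodule.Quotient.mk_surjective _ z
  exact (Submodule.Quotient.eq _).2 (H.sub_mem_range n x hx)

/-- Homotopy equivalent complexes have isomorphic homology. -/
def HomotopyEquiv.homologyEquiv (e : HomotopyEquiv dC dD) (n : ℕ) :
    homologyOf k dC n ≃ₗ[k] homologyOf k dD n :=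
  LinearEquiv.ofLinearMap (homologyMap e.isChainMap_hom n) (homologyMap e.isChainMap_inv n)
    (LinearMap.ext <|
      homologyMap_homologyMap e.isChainMap_inv e.isChainMap_hom e.isHomotopy_right n)
    (LinearMap.ext <|
      homologyMap_homologyMap e.isChainMap_hom e.isChainMap_inv e.isHomotopy_left n)

lemma cyclesOf_zero : ∀ n, cyclesOf k (0 : ∀ n, C (n + 1) →ₗ[k] C n) n = ⊤
  | 0 => rfl
  | _ + 1 => LinearMap.ker_zero

variable (k C) in
/-- A complex with zero differential is its own homology. -/
def homologyZeroEquiv (n : ℕ) : homologyOf k (0 : ∀ n, C (n + 1) →ₗ[k] C n) n ≃ₗ[k] C n :=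
  Submodule.quotEquivOfEqBot _ (by
    rw [Pi.zero_apply, LinearMap.range_zero, Submodule.comap_bot, Submodule.ker_subtype]) ≪≫ₗ
  LinearEquiv.ofTop _ (cyclesOf_zero n)

variable (k C D) in
/-- The reindexing `p ↦ (p, n - p)` of the pairs with sum `n`. -/
def totEquivFin (n : ℕ) :
    Tot k C D n ≃ₗ[k] ⨁ p : Fin (n + 1), C (p : ℕ) ⊗[k] D (n - (p : ℕ)) :=
  DirectSum.lequivCongrLeft k (Finset.Nat.antidiagonalEquivFin n)

lemma exists_factor_of_ker_le {V V' W : Type*} [AddCommGroup V] [Module k V] [AddCommGroup V']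
    [Module k V'] [AddCommGroup W] [Module k W] (f : V →ₗ[k] V') (φ : V →ₗ[k] W)
    (h : LinearMap.ker f ≤ LinearMap.ker φ) : ∃ g : V' →ₗ[k] W, ∀ x, g (f x) = φ x := by
  obtain ⟨g, hg⟩ :=
    ((LinearMap.ker f).liftQ φ h ∘ₗ f.quotKerEquivRange.symm.toLinearMap).exists_extend
  refine ⟨g, fun x => (LinearMap.congr_fun hg ⟨f x, x, rfl⟩).trans ?_⟩
  exact congrArg ((LinearMap.ker f).liftQ φ h) (f.quotKerEquivRange_symm_apply_image x ⟨x, rfl⟩)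

section Splitting

variable (dC) in
/-- A projection of the chains onto the cycles. -/
def cycleProj (n : ℕ) : C n →ₗ[k] cyclesOf k dC n := (cyclesOf k dC n).subtype.leftInverse

@[simp] lemma cycleProj_coe (n : ℕ) (z : cyclesOf k dC n) : cycleProj dC n z = z :=
  LinearMap.leftInverse_apply_of_inj (Submodule.ker_subtype _) z

variable (dC) in
/-- The class of the cycle onto which a chain is projected. -/
def homologyProj (n : ℕ) : C n →ₗ[k] homologyOf k dC n := Submodule.mkQ _ ∘ₗ cycleProj dC n

variable (dC) in
lemma exists_homologyLift : ∃ i : ∀ n, homologyOf k dC n →ₗ[k] C n,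
    (∀ n z, i n z ∈ cyclesOf k dC n) ∧ ∀ n z, homologyProj dC n (i n z) = z := by
  choose σ hσ using fun n => (Submodule.mkQ
    ((LinearMap.range (dC n)).comap (cyclesOf k dC n).subtype)).exists_rightInverse_of_surjective
      (Submodule.range_mkQ _)
  refine ⟨fun n => (cyclesOf k dC n).subtype ∘ₗ σ n, fun n z => (σ n z).2, fun n z => ?_⟩
  exact (congrArg (Submodule.mkQ _) (cycleProj_coe n (σ n z))).trans (LinearMap.congr_fun (hσ n) z)

lemma d_mem_cyclesOf (dd : ∀ n x, dC n (dC (n + 1) x) = 0) : ∀ n x, dC n x ∈ cyclesOf k dC n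
  | 0, _ => trivial
  | n + 1, x => dd n x

lemma homologyProj_d (dd : ∀ n x, dC n (dC (n + 1) x) = 0) (n : ℕ) (x : C (n + 1)) :
    homologyProj dC n (dC n x) = 0 := by
  refine (congrArg (Submodule.mkQ _) (cycleProj_coe n ⟨_, d_mem_cyclesOf dd n x⟩)).trans ?_
  exact (Submodule.Quotient.mk_eq_zero _).2 ⟨x, rfl⟩

lemma cycleProj_sub_mem_range {i : ∀ n, homologyOf k dC n →ₗ[k] C n}
    (hi : ∀ n z, i n z ∈ cyclesOf k dC n) (hp : ∀ n z, homologyProj dC n (i n z) = z) (n : ℕ)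
    (x : C n) : (cycleProj dC n x - i n (homologyProj dC n x) : C n) ∈ LinearMap.range (dC n) := by
  have hc : Submodule.mkQ _ (⟨_, hi n (homologyProj dC n x)⟩ : cyclesOf k dC n) =
      homologyProj dC n x :=
    (congrArg (Submodule.mkQ _) (cycleProj_coe n ⟨_, hi n _⟩).symm).trans (hp n _)
  exact (Submodule.Quotient.eq
    ((LinearMap.range (dC n)).comap (cyclesOf k dC n).subtype)).1 hc.symm

/-- With `g` the partial inverse of `d` determined by the projection onto cycles and `i` a choice
of representing cycles, `g ∘ (projection onto cycles - i ∘ p)` contracts the complex onto its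
homology. -/
theorem nonempty_homotopyEquiv_homology (dd : ∀ n x, dC n (dC (n + 1) x) = 0) :
    Nonempty (HomotopyEquiv dC (0 : ∀ n, homologyOf k dC (n + 1) →ₗ[k] homologyOf k dC n)) := by
  obtain ⟨i, hi, hp⟩ := exists_homologyLift dC
  have cycleProj_of_d (n : ℕ) (z : C (n + 1)) : dC n (cycleProj dC (n + 1) z) = 0 :=
    (cycleProj dC (n + 1) z).2
  choose g hg using fun n => exists_factor_of_ker_le (dC n)
    (LinearMap.id - (cyclesOf k dC (n + 1)).subtype ∘ₗ cycleProj dC (n + 1)) fun x hx =>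
      LinearMap.mem_ker.2 <|
        sub_eq_zero.2 (congrArg Subtype.val (cycleProj_coe (n + 1) ⟨x, hx⟩)).symm
  let h n := g n ∘ₗ ((cyclesOf k dC n).subtype ∘ₗ cycleProj dC n - i n ∘ₗ homologyProj dC n)
  have d_h n x : dC n (h n x) = cycleProj dC n x - i n (homologyProj dC n x) := by
    obtain ⟨z, hz⟩ := cycleProj_sub_mem_range hi hp n x
    change dC n (g n (cycleProj dC n x - i n (homologyProj dC n x))) = _
    rw [← hz, hg]
    simp [cycleProj_of_d]
  have h_d n x : h n (dC n x) = x - cycleProj dC (n + 1) x := by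
    change g n (cycleProj dC n (dC n x) - i n (homologyProj dC n (dC n x))) = _
    rw [homologyProj_d dd, map_zero, sub_zero, cycleProj_coe n ⟨_, d_mem_cyclesOf dd n x⟩, hg]
    rfl
  exact ⟨{
    hom := homologyProj dC
    inv := i
    isChainMap_hom := fun n x => (homologyProj_d dd n x).symm
    isChainMap_inv := fun n z => (hi (n + 1) z).trans (map_zero _).symm
    leftHomotopy := h
    isHomotopy_left := ⟨fun x => by
        rw [d_h, LinearMap.comp_apply, sub_add_cancel, cycleProj_coe 0 ⟨x, trivial⟩],
      fun n x => by rw [d_h, h_d, LinearMap.comp_apply]; abel⟩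
    rightHomotopy := 0
    isHomotopy_right := isHomotopy_zero _ hp }⟩

end Splitting

theorem kunneth (hC : ∀ n x, dC n (dC (n + 1) x) = 0) (hD : ∀ n x, dD n (dD (n + 1) x) = 0)
    (n : ℕ) : Nonempty (homologyOf k (Tot.d dC dD) n ≃ₗ[k]
      Tot k (homologyOf k dC) (homologyOf k dD) n) := by
  obtain ⟨e⟩ := nonempty_homotopyEquiv_homology hC
  obtain ⟨e'⟩ := nonempty_homotopyEquiv_homology hD
  have E := e.tensor e'
  rw [show Tot.d (R := k) (C := homologyOf k dC) (D := homologyOf k dD) 0 0 = 0 from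
    funext Tot.d_zero_zero] at E
  exact ⟨E.homologyEquiv n ≪≫ₗ homologyZeroEquiv k _ n⟩

end Kunneth

/-! ### Free resolutions and the comparison theorem -/

section Resolution

variable {R S : Type*} [CommRing R] [Ring S] [Algebra R S]

section Linearize

variable {V M : Type*} [AddCommGroup V] [Module R V] [AddCommGroup M] [Module R M] [Module S M]
  [IsScalarTower R S M]

/-- The `S`-linear map on the free module `S ⊗ V` with prescribed values on the generators. -/
def freeLift (ψ : V →ₗ[R] M) : S ⊗[R] V →ₗ[S] M :=
  TensorProduct.AlgebraTensorModule.lift (LinearMap.toSpanSingleton S (V →ₗ[R] M) ψ)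

@[simp] lemma freeLift_tmul (ψ : V →ₗ[R] M) (s : S) (v : V) :
    freeLift ψ (s ⊗ₜ v) = s • ψ v := by
  simp [freeLift]

/-- The `S`-linear map on the free module `S ⊗ V` which agrees with `φ` on the generators
`1 ⊗ v`. -/
def linearize (φ : S ⊗[R] V →ₗ[R] M) : S ⊗[R] V →ₗ[S] M :=
  freeLift (φ ∘ₗ TensorProduct.mk R S V 1)

lemma linearize_one_tmul (φ : S ⊗[R] V →ₗ[R] M) (v : V) :
    linearize φ (1 ⊗ₜ v) = φ (1 ⊗ₜ v) := by
  simp [linearize]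

lemma free_hom_ext {f g : S ⊗[R] V →ₗ[S] M} (h : ∀ v, f (1 ⊗ₜ v) = g (1 ⊗ₜ v)) : f = g := by
  refine TensorProduct.AlgebraTensorModule.ext fun s v => ?_
  rw [← mul_one s, ← smul_eq_mul, ← TensorProduct.smul_tmul', map_smul, map_smul, h]

end Linearize

variable (R) in
/-- The graded module `N ⊗ V n`; for `N = S` it is a graded free `S`-module on the generators
`V n`. -/
abbrev Chains (N : Type*) [AddCommGroup N] [Module R N] (V : ℕ → Type*) [∀ n, AddCommGroup (V n)]
    [∀ n, Module R (V n)] (n : ℕ) : Type _ := N ⊗[R] V n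

variable (R S) in
/-- A resolution of the `S`-module `M` by the free modules `S ⊗ V n`, together with an `R`-linear
contraction `s` and an `R`-linear section `η` of the augmentation `ε`. -/
structure FreeResolution (V : ℕ → Type*) [∀ n, AddCommGroup (V n)] [∀ n, Module R (V n)]
    (M : Type*) [AddCommGroup M] [Module R M] [Module S M] [IsScalarTower R S M] where
  d : ∀ n, Chains R S V (n + 1) →ₗ[S] Chains R S V n
  ε : Chains R S V 0 →ₗ[S] M
  s : ∀ n, Chains R S V n →ₗ[R] Chains R S V (n + 1)
  η : M →ₗ[R] Chains R S V 0
  d_d : ∀ n x, d n (d (n + 1) x) = 0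
  ε_d : ∀ x, ε (d 0 x) = 0
  ε_η : ∀ m, ε (η m) = m
  d_s_zero : ∀ x, d 0 (s 0 x) = x - η (ε x)
  d_s_succ : ∀ n x, d (n + 1) (s (n + 1) x) = x - s n (d n x)

namespace FreeResolution

variable {V W : ℕ → Type*} [∀ n, AddCommGroup (V n)] [∀ n, Module R (V n)]
  [∀ n, AddCommGroup (W n)] [∀ n, Module R (W n)]
  {M : Type*} [AddCommGroup M] [Module R M] [Module S M] [IsScalarTower R S M]

/-- The lift of the identity of `M` to a chain map between two resolutions. -/
def comparison (P : FreeResolution R S V M) (Q : FreeResolution R S W M) :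
    ∀ n, Chains R S V n →ₗ[S] Chains R S W n
  | 0 => linearize (Q.η ∘ₗ P.ε.restrictScalars R)
  | n + 1 => linearize (Q.s n ∘ₗ (P.comparison Q n ∘ₗ P.d n).restrictScalars R)

lemma ε_comparison (P : FreeResolution R S V M) (Q : FreeResolution R S W M)
    (x : Chains R S V 0) : Q.ε (P.comparison Q 0 x) = P.ε x := by
  suffices Q.ε ∘ₗ P.comparison Q 0 = P.ε from LinearMap.congr_fun this x
  refine free_hom_ext fun v => ?_
  simp [comparison, linearize_one_tmul, Q.ε_η]

lemma isChainMap_comparison (P : FreeResolution R S V M) (Q : FreeResolution R S W M) :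
    IsChainMap P.d Q.d (P.comparison Q) := by
  intro n x
  suffices Q.d n ∘ₗ P.comparison Q (n + 1) = P.comparison Q n ∘ₗ P.d n from
    LinearMap.congr_fun this x
  refine free_hom_ext fun v => ?_
  simp only [LinearMap.comp_apply, comparison, linearize_one_tmul, LinearMap.restrictScalars_apply]
  cases n with
  | zero => rw [Q.d_s_zero, ε_comparison, P.ε_d, map_zero, sub_zero]
  | succ n => rw [Q.d_s_succ, isChainMap_comparison P Q n, P.d_d, map_zero,
      map_zero, sub_zero]

/-- A homotopy between the identity and a chain endomorphism over the identity of `M`. -/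
def nullHomotopy (P : FreeResolution R S V M) (f : ∀ n, Chains R S V n →ₗ[S] Chains R S V n) :
    ∀ n, Chains R S V n →ₗ[S] Chains R S V (n + 1)
  | 0 => linearize (P.s 0 ∘ₗ (LinearMap.id - f 0).restrictScalars R)
  | n + 1 => linearize (P.s (n + 1) ∘ₗ
      (LinearMap.id - f (n + 1) - P.nullHomotopy f n ∘ₗ P.d n).restrictScalars R)

section NullHomotopy

variable (P : FreeResolution R S V M) {f : ∀ n, Chains R S V n →ₗ[S] Chains R S V n}

lemma d_nullHomotopy_zero (hε : ∀ x, P.ε (f 0 x) = P.ε x) (x : Chains R S V 0) :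
    P.d 0 (P.nullHomotopy f 0 x) = x - f 0 x := by
  suffices P.d 0 ∘ₗ P.nullHomotopy f 0 = LinearMap.id - f 0 from LinearMap.congr_fun this x
  refine free_hom_ext fun v => ?_
  simp [nullHomotopy, linearize_one_tmul, P.d_s_zero, hε]

lemma d_nullHomotopy_succ (hf : IsChainMap P.d P.d f) (hε : ∀ x, P.ε (f 0 x) = P.ε x) (n : ℕ)
    (x : Chains R S V (n + 1)) : P.d (n + 1) (P.nullHomotopy f (n + 1) x) =
      x - f (n + 1) x - P.nullHomotopy f n (P.d n x) := by
  suffices P.d (n + 1) ∘ₗ P.nullHomotopy f (n + 1) =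
      LinearMap.id - f (n + 1) - P.nullHomotopy f n ∘ₗ P.d n from LinearMap.congr_fun this x
  refine free_hom_ext fun v => ?_
  have boundary (y : Chains R S V (n + 1)) :
      P.d n (P.nullHomotopy f n (P.d n y)) = P.d n y - f n (P.d n y) := by
    cases n with
    | zero => exact P.d_nullHomotopy_zero hε _
    | succ n => rw [d_nullHomotopy_succ hf hε n, P.d_d, map_zero, sub_zero]
  simp only [LinearMap.comp_apply, LinearMap.sub_apply, LinearMap.id_apply,
    LinearMap.restrictScalars_apply, nullHomotopy, linearize_one_tmul, P.d_s_succ, map_sub,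
    boundary, hf _ _]
  abel_nf

lemma isHomotopy_nullHomotopy (hf : IsChainMap P.d P.d f) (hε : ∀ x, P.ε (f 0 x) = P.ε x) :
    IsHomotopy P.d (P.nullHomotopy f) f where
  zero x := by rw [P.d_nullHomotopy_zero hε, sub_add_cancel]
  succ n x := by rw [P.d_nullHomotopy_succ hf hε, sub_add_cancel, sub_add_cancel]

end NullHomotopy

/-- Any two free resolutions of the same module are homotopy equivalent. -/
def homotopyEquiv (P : FreeResolution R S V M) (Q : FreeResolution R S W M) :
    HomotopyEquiv P.d Q.d where
  hom := P.comparison Q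
  inv := Q.comparison P
  isChainMap_hom := P.isChainMap_comparison Q
  isChainMap_inv := Q.isChainMap_comparison P
  leftHomotopy := P.nullHomotopy fun n => Q.comparison P n ∘ₗ P.comparison Q n
  isHomotopy_left := P.isHomotopy_nullHomotopy
    ((P.isChainMap_comparison Q).comp (Q.isChainMap_comparison P))
    fun x => (Q.ε_comparison P _).trans (P.ε_comparison Q x)
  rightHomotopy := Q.nullHomotopy fun n => P.comparison Q n ∘ₗ Q.comparison P n
  isHomotopy_right := Q.isHomotopy_nullHomotopy
    ((Q.isChainMap_comparison P).comp (P.isChainMap_comparison Q))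
    fun x => (P.ε_comparison Q _).trans (Q.ε_comparison P x)

end FreeResolution

section Induce

variable {V W : Type*} [AddCommGroup V] [Module R V] [AddCommGroup W] [Module R W]
  (N : Type*) [AddCommGroup N] [Module R N] [Module Sᵐᵒᵖ N] [IsScalarTower R Sᵐᵒᵖ N]

variable (R S) in
/-- The action `n ↦ (s ↦ n s)` of `S` on a right module `N`. -/
def orbit : N →ₗ[R] S →ₗ[R] N :=
  LinearMap.mk₂ R (fun n s => op s • n) (fun _ _ _ => smul_add _ _ _)
    (fun _ _ _ => smul_comm _ _ _) (fun _ _ _ => by rw [op_add, add_smul])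
    (fun _ _ _ => by rw [op_smul, smul_assoc])

variable {N} in
@[simp] lemma orbit_apply (n : N) (s : S) : orbit R S N n s = op s • n := rfl

/-- The map `N ⊗_S (S ⊗ V) → N ⊗_S (S ⊗ W)` obtained from an `S`-linear map by extension of
scalars, where `N ⊗_S (S ⊗ V)` is written `N ⊗ V`. -/
def induce (f : S ⊗[R] V →ₗ[S] S ⊗[R] W) : N ⊗[R] V →ₗ[R] N ⊗[R] W :=
  TensorProduct.lift <| LinearMap.mk₂ R
    (fun n v => (orbit R S N n).rTensor W (f (1 ⊗ₜ v)))
    (fun _ _ _ => by simp [LinearMap.rTensor_add])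
    (fun _ _ _ => by simp [LinearMap.rTensor_smul])
    (fun _ _ _ => by simp [TensorProduct.tmul_add])
    (fun _ _ _ => by simp)

@[simp] lemma induce_tmul (f : S ⊗[R] V →ₗ[S] S ⊗[R] W) (n : N) (v : V) :
    induce N f (n ⊗ₜ v) = (orbit R S N n).rTensor W (f (1 ⊗ₜ v)) := rfl

lemma rTensor_orbit_smul (n : N) (s : S) (w : S ⊗[R] W) :
    (orbit R S N n).rTensor W (s • w) = (orbit R S N (op s • n)).rTensor W w := by
  induction w with
  | zero => simp
  | add w w' hw hw' => simp [hw, hw']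
  | tmul t w => simp [TensorProduct.smul_tmul', mul_smul]

lemma induce_rTensor_orbit (f : S ⊗[R] V →ₗ[S] S ⊗[R] W) (n : N) (x : S ⊗[R] V) :
    induce N f ((orbit R S N n).rTensor V x) = (orbit R S N n).rTensor W (f x) := by
  induction x with
  | zero => simp
  | add x y hx hy => simp [hx, hy]
  | tmul s v =>
    have generator : s ⊗ₜ[R] v = s • (1 ⊗ₜ[R] v) := by simp [TensorProduct.smul_tmul']
    rw [LinearMap.rTensor_tmul, orbit_apply, induce_tmul, generator, map_smul f,
      rTensor_orbit_smul]

lemma induce_comp {U : Type*} [AddCommGroup U] [Module R U] (g : S ⊗[R] W →ₗ[S] S ⊗[R] U)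
    (f : S ⊗[R] V →ₗ[S] S ⊗[R] W) : induce N (g ∘ₗ f) = induce N g ∘ₗ induce N f :=
  TensorProduct.ext' fun n v => (induce_rTensor_orbit N g n (f (1 ⊗ₜ v))).symm

lemma induce_id : induce N (LinearMap.id : S ⊗[R] V →ₗ[S] S ⊗[R] V) = LinearMap.id :=
  TensorProduct.ext' fun n v => by simp

lemma induce_add (f g : S ⊗[R] V →ₗ[S] S ⊗[R] W) : induce N (f + g) = induce N f + induce N g :=
  TensorProduct.ext' fun n v => by simp

lemma induce_zero : induce N (0 : S ⊗[R] V →ₗ[S] S ⊗[R] W) = 0 :=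
  TensorProduct.ext' fun n v => by simp

section Graded

variable {V W : ℕ → Type*} [∀ n, AddCommGroup (V n)] [∀ n, Module R (V n)]
  [∀ n, AddCommGroup (W n)] [∀ n, Module R (W n)]
  {dV : ∀ n, Chains R S V (n + 1) →ₗ[S] Chains R S V n}
  {dW : ∀ n, Chains R S W (n + 1) →ₗ[S] Chains R S W n}

lemma isChainMap_induce {f : ∀ n, Chains R S V n →ₗ[S] Chains R S W n}
    (hf : IsChainMap dV dW f) :
    IsChainMap (C := Chains R N V) (D := Chains R N W) (fun n => induce N (dV n))
      (fun n => induce N (dW n)) fun n => induce N (f n) := by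
  intro n x
  have comm : dW n ∘ₗ f (n + 1) = f n ∘ₗ dV n := LinearMap.ext (hf n)
  simpa only [induce_comp, LinearMap.comp_apply] using
    LinearMap.congr_fun (congrArg (induce N) comm) x

lemma isHomotopy_induce {h : ∀ n, Chains R S V n →ₗ[S] Chains R S V (n + 1)}
    {π : ∀ n, Chains R S V n →ₗ[S] Chains R S V n} (H : IsHomotopy dV h π) :
    IsHomotopy (C := Chains R N V) (fun n => induce N (dV n)) (fun n => induce N (h n))
      fun n => induce N (π n) where
  zero x := by
    have H' : dV 0 ∘ₗ h 0 + π 0 = LinearMap.id := LinearMap.ext H.zero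
    simpa only [induce_add, induce_comp, induce_id, LinearMap.add_apply, LinearMap.comp_apply,
      LinearMap.id_apply] using
      LinearMap.congr_fun (congrArg (induce N) H') x
  succ n x := by
    have H' : dV (n + 1) ∘ₗ h (n + 1) + h n ∘ₗ dV n + π (n + 1) = LinearMap.id :=
      LinearMap.ext (H.succ n)
    simpa only [induce_add, induce_comp, induce_id, LinearMap.add_apply, LinearMap.comp_apply,
      LinearMap.id_apply] using
      LinearMap.congr_fun (congrArg (induce N) H') x

/-- Extension of scalars preserves homotopy equivalences. -/
def HomotopyEquiv.induced (e : HomotopyEquiv dV dW) :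
    HomotopyEquiv (C := Chains R N V) (D := Chains R N W) (fun n => induce N (dV n))
      (fun n => induce N (dW n)) where
  hom n := induce N (e.hom n)
  inv n := induce N (e.inv n)
  isChainMap_hom := isChainMap_induce N e.isChainMap_hom
  isChainMap_inv := isChainMap_induce N e.isChainMap_inv
  leftHomotopy n := induce N (e.leftHomotopy n)
  isHomotopy_left := by simpa only [induce_comp] using isHomotopy_induce N e.isHomotopy_left
  rightHomotopy n := induce N (e.rightHomotopy n)
  isHomotopy_right := by simpa only [induce_comp] using isHomotopy_induce N e.isHomotopy_right

end Graded

end Induce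

end Resolution

/-! ### Tensor products of free resolutions -/

section TensorResolution

variable {R : Type*} [CommRing R] {V W : ℕ → Type*} [∀ n, AddCommGroup (V n)]
  [∀ n, Module R (V n)] [∀ n, AddCommGroup (W n)] [∀ n, Module R (W n)]

section Interchange

variable {X N N' Y M M' : Type*} [AddCommGroup X] [Module R X] [AddCommGroup N] [Module R N]
  [AddCommGroup N'] [Module R N'] [AddCommGroup Y] [Module R Y] [AddCommGroup M] [Module R M]
  [AddCommGroup M'] [Module R M']

variable (V W) in
/-- For `X ≃ N ⊗ N'`, the interchange isomorphism
`X ⊗ ⨁_{p+q=n} V p ⊗ W q ≃ ⨁_{p+q=n} (N ⊗ V p) ⊗ (N' ⊗ W q)`. -/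
def interchange (ν : X ≃ₗ[R] N ⊗[R] N') (n : ℕ) :
    Chains R X (Tot R V W) n ≃ₗ[R] Tot R (Chains R N V) (Chains R N' W) n :=
  TensorProduct.congr ν (LinearEquiv.refl R _) ≪≫ₗ
  TensorProduct.directSumRight R R (N ⊗[R] N')
    (fun i : antidiagonal n => V i.1.1 ⊗[R] W i.1.2) ≪≫ₗ
  DirectSum.congrLinearEquiv fun i : antidiagonal n =>
    TensorProduct.tensorTensorTensorComm R N N' (V i.1.1) (W i.1.2)

lemma interchange_tmul_ι (ν : X ≃ₗ[R] N ⊗[R] N') {p q n : ℕ} (h : p + q = n) (x : N) (x' : N')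
    (v : V p) (w : W q) :
    interchange V W ν n (ν.symm (x ⊗ₜ x') ⊗ₜ Tot.ι R V W h (v ⊗ₜ w)) =
      Tot.ι R (Chains R N V) (Chains R N' W) h ((x ⊗ₜ v) ⊗ₜ (x' ⊗ₜ w)) := by
  simp only [interchange, LinearEquiv.trans_apply, TensorProduct.congr_tmul, Tot.ι,
    LinearEquiv.apply_symm_apply, LinearEquiv.refl_apply, TensorProduct.directSumRight_tmul_lof]
  exact lmap_lof (ι := antidiagonal n) (fun i => (TensorProduct.tensorTensorTensorComm R N N'
    (V i.1.1) (W i.1.2)).toLinearMap) ⟨(p, q), mem_antidiagonal.2 h⟩ _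

lemma hom_ext_symm_tmul {U Z : Type*} [AddCommGroup U] [Module R U] [AddCommGroup Z] [Module R Z]
    (ν : X ≃ₗ[R] N ⊗[R] N') {f g : X ⊗[R] U →ₗ[R] Z}
    (h : ∀ x x' u, f (ν.symm (x ⊗ₜ x') ⊗ₜ u) = g (ν.symm (x ⊗ₜ x') ⊗ₜ u)) : f = g := by
  suffices TensorProduct.curry f ∘ₗ ν.symm.toLinearMap = TensorProduct.curry g ∘ₗ
      ν.symm.toLinearMap from
    TensorProduct.curry_injective (LinearMap.ext fun x => by
      simpa using LinearMap.congr_fun this (ν x))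
  exact TensorProduct.ext' fun x x' => LinearMap.ext (h x x')

lemma interchange_rTensor (ν : X ≃ₗ[R] N ⊗[R] N') (μ : Y ≃ₗ[R] M ⊗[R] M') {α : X →ₗ[R] Y}
    {β : N →ₗ[R] M} {β' : N' →ₗ[R] M'}
    (hα : ∀ x x', α (ν.symm (x ⊗ₜ x')) = μ.symm (β x ⊗ₜ β' x')) (n : ℕ)
    (z : Chains R X (Tot R V W) n) :
    interchange V W μ n (α.rTensor _ z) =
      Tot.map (fun n => β.rTensor (V n)) (fun n => β'.rTensor (W n)) n
        (interchange V W ν n z) := by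
  suffices (interchange V W μ n).toLinearMap ∘ₗ α.rTensor _ =
      Tot.map (fun n => β.rTensor (V n)) (fun n => β'.rTensor (W n)) n ∘ₗ
        (interchange V W ν n).toLinearMap from LinearMap.congr_fun this z
  refine hom_ext_symm_tmul ν fun x x' u => ?_
  suffices (interchange V W μ n).toLinearMap ∘ₗ TensorProduct.mk R Y _ (α (ν.symm (x ⊗ₜ x'))) =
      Tot.map (fun n => β.rTensor (V n)) (fun n => β'.rTensor (W n)) n ∘ₗ
        (interchange V W ν n).toLinearMap ∘ₗ TensorProduct.mk R X _ (ν.symm (x ⊗ₜ x')) from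
    LinearMap.congr_fun this u
  refine Tot.hom_ext fun p q h v w => ?_
  simp only [LinearMap.comp_apply, LinearEquiv.coe_coe, TensorProduct.mk_apply,
    LinearMap.rTensor_tmul, hα, interchange_tmul_ι, Tot.map_ι]

end Interchange

variable {S S₁ S₂ : Type*} [Ring S] [Algebra R S] [Ring S₁] [Algebra R S₁] [Ring S₂] [Algebra R S₂]
  (κ : S ≃ₐ[R] S₁ ⊗[R] S₂)

lemma interchange_smul (n : ℕ) (r : S₁) (r' : S₂) (z : Chains R S (Tot R V W) n) :
    interchange V W κ.toLinearEquiv n (κ.symm (r ⊗ₜ r') • z) =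
      Tot.map (fun n => Algebra.lsmul R R (Chains R S₁ V n) r)
        (fun n => Algebra.lsmul R R (Chains R S₂ W n) r') n
        (interchange V W κ.toLinearEquiv n z) :=
  interchange_rTensor κ.toLinearEquiv κ.toLinearEquiv
    (α := LinearMap.mulLeft R (κ.symm (r ⊗ₜ r'))) (β := LinearMap.mulLeft R r)
    (β' := LinearMap.mulLeft R r') (fun x x' => by simp [← map_mul]) n z

/-- A map is linear over `S ≃ S₁ ⊗ S₂` if it commutes with the pure tensors. -/
def linearOfTmul {X Y : Type*} [AddCommGroup X] [Module S X] [AddCommGroup Y] [Module S Y]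
    (f : X →+ Y) (hf : ∀ r r' x, f (κ.symm (r ⊗ₜ r') • x) = κ.symm (r ⊗ₜ r') • f x) :
    X →ₗ[S] Y where
  toFun := f
  map_add' := f.map_add
  map_smul' s x := by
    obtain ⟨t, rfl⟩ := κ.symm.surjective s
    induction t with
    | zero => simp
    | add t t' ht ht' =>
      simp only [RingHom.id_apply] at ht ht' ⊢
      rw [map_add, add_smul, map_add, ht, ht', add_smul]
    | tmul r r' => exact hf r r' x

namespace FreeResolution

variable {M₁ M₂ : Type*} [AddCommGroup M₁] [Module R M₁] [Module S₁ M₁] [IsScalarTower R S₁ M₁]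
  [AddCommGroup M₂] [Module R M₂] [Module S₂ M₂] [IsScalarTower R S₂ M₂]

/-- The projection of a resolution onto the resolved module, viewed in degree `0`. -/
def augmentation (P : FreeResolution R S₁ V M₁) : ∀ n, Chains R S₁ V n →ₗ[R] Chains R S₁ V n
  | 0 => P.η ∘ₗ P.ε.restrictScalars R
  | _ + 1 => 0

lemma isChainMap_augmentation (P : FreeResolution R S₁ V M₁) :
    IsChainMap (fun n => (P.d n).restrictScalars R) (fun n => (P.d n).restrictScalars R)
      P.augmentation
  | 0, x => by simp [augmentation, P.ε_d]
  | n + 1, _ => map_zero (P.d (n + 1))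

lemma isHomotopy_augmentation (P : FreeResolution R S₁ V M₁) :
    IsHomotopy (fun n => (P.d n).restrictScalars R) P.s P.augmentation where
  zero x := by simp [augmentation, P.d_s_zero]
  succ n x := by simp [augmentation, P.d_s_succ]

variable (P : FreeResolution R S₁ V M₁) (Q : FreeResolution R S₂ W M₂)

/-- The differential of `P ⊗ Q`, transported along the interchange isomorphism. -/
def tensorD (n : ℕ) :
    Chains R S (Tot R V W) (n + 1) →ₗ[S] Chains R S (Tot R V W) n :=
  linearOfTmul κ
    ((interchange V W κ.toLinearEquiv n).symm.toLinearMap ∘ₗ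
      Tot.d (fun n => (P.d n).restrictScalars R) (fun n => (Q.d n).restrictScalars R) n ∘ₗ
      (interchange V W κ.toLinearEquiv (n + 1)).toLinearMap).toAddMonoidHom fun r r' x =>
    (interchange V W κ.toLinearEquiv n).injective <| by
      simp only [LinearMap.toAddMonoidHom_coe, LinearMap.comp_apply, LinearEquiv.coe_coe,
        interchange_smul, LinearEquiv.apply_symm_apply]
      exact Tot.isChainMap_map (by intro n x; simp) (by intro n x; simp) n _

lemma interchange_tensorD (n : ℕ) (z : Chains R S (Tot R V W) (n + 1)) :
    interchange V W κ.toLinearEquiv n (tensorD κ P Q n z) =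
      Tot.d (fun n => (P.d n).restrictScalars R) (fun n => (Q.d n).restrictScalars R) n
        (interchange V W κ.toLinearEquiv (n + 1) z) :=
  LinearEquiv.apply_symm_apply _ _

lemma map_augmentation_zero (z : Tot R (Chains R S₁ V) (Chains R S₂ W) 0) :
    Tot.map P.augmentation Q.augmentation 0 z =
      (Tot.zeroEquiv (Chains R S₁ V) (Chains R S₂ W)).symm (TensorProduct.map P.η Q.η
        (TensorProduct.map (P.ε.restrictScalars R) (Q.ε.restrictScalars R)
          (Tot.zeroEquiv (Chains R S₁ V) (Chains R S₂ W) z))) := by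
  rw [LinearEquiv.eq_symm_apply, Tot.zeroEquiv_map, ← LinearMap.comp_apply,
    ← TensorProduct.map_comp]
  rfl

lemma map_augmentation_succ (n : ℕ) (z : Tot R (Chains R S₁ V) (Chains R S₂ W) (n + 1)) :
    Tot.map P.augmentation Q.augmentation (n + 1) z = 0 := by
  suffices Tot.map P.augmentation Q.augmentation (n + 1) = 0 from LinearMap.congr_fun this z
  refine Tot.hom_ext fun p q h x y => ?_
  rcases p with _ | p <;> rcases q with _ | q
  · omega
  all_goals simp [augmentation]

section Tensor

variable {M : Type*} [AddCommGroup M] [Module R M] [Module S M] {ξ : M ≃ₗ[R] M₁ ⊗[R] M₂}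
  (hξ : ∀ r r' m m', κ.symm (r ⊗ₜ r') • ξ.symm (m ⊗ₜ m') = ξ.symm ((r • m) ⊗ₜ (r' • m')))

/-- The augmentation of `P ⊗ Q`, with values in `M ≃ M₁ ⊗ M₂`. -/
def tensorε : Chains R S (Tot R V W) 0 →ₗ[S] M :=
  linearOfTmul κ
    (ξ.symm.toLinearMap ∘ₗ
      TensorProduct.map (P.ε.restrictScalars R) (Q.ε.restrictScalars R) ∘ₗ
      (Tot.zeroEquiv (Chains R S₁ V) (Chains R S₂ W)).toLinearMap ∘ₗ
      (interchange V W κ.toLinearEquiv 0).toLinearMap).toAddMonoidHom fun r r' x => by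
    simp only [LinearMap.toAddMonoidHom_coe, LinearMap.comp_apply, LinearEquiv.coe_coe,
      interchange_smul, Tot.zeroEquiv_map]
    induction Tot.zeroEquiv (Chains R S₁ V) (Chains R S₂ W)
      (interchange V W κ.toLinearEquiv 0 x) with
    | zero => simp
    | add y y' hy hy' => simp only [map_add, smul_add, hy, hy']
    | tmul y y' => simp [hξ]

lemma tensorε_apply (z : Chains R S (Tot R V W) 0) :
    tensorε κ P Q hξ z = ξ.symm (TensorProduct.map (P.ε.restrictScalars R) (Q.ε.restrictScalars R)
      (Tot.zeroEquiv (Chains R S₁ V) (Chains R S₂ W) (interchange V W κ.toLinearEquiv 0 z))) := rfl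

variable [IsScalarTower R S M]

/-- The tensor product of two free resolutions, over a ring `S ≃ S₁ ⊗ S₂`. -/
def tensor : FreeResolution R S (Tot R V W) M where
  d := tensorD κ P Q
  ε := tensorε κ P Q hξ
  s n := (interchange V W κ.toLinearEquiv (n + 1)).symm.toLinearMap ∘ₗ
    Tot.homotopy P.s P.augmentation Q.s n ∘ₗ (interchange V W κ.toLinearEquiv n).toLinearMap
  η := (interchange V W κ.toLinearEquiv 0).symm.toLinearMap ∘ₗ
    (Tot.zeroEquiv (Chains R S₁ V) (Chains R S₂ W)).symm.toLinearMap ∘ₗ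
    TensorProduct.map P.η Q.η ∘ₗ ξ.toLinearMap
  d_d n x := (interchange V W κ.toLinearEquiv n).injective <| by
    rw [interchange_tensorD, interchange_tensorD, map_zero, Tot.d_d _ _ P.d_d Q.d_d]
  ε_d x := by
    rw [tensorε_apply, interchange_tensorD, Tot.map_zeroEquiv_d P.ε_d Q.ε_d, map_zero]
  ε_η m := ξ.injective <| by
    simp only [tensorε_apply, LinearMap.comp_apply, LinearEquiv.coe_coe,
      LinearEquiv.apply_symm_apply]
    induction ξ m with
    | zero => simp
    | add y y' hy hy' => simp only [map_add, hy, hy']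
    | tmul y y' => simp [P.ε_η, Q.ε_η]
  d_s_zero x := (interchange V W κ.toLinearEquiv 0).injective <| by
    rw [interchange_tensorD, map_sub, tensorε_apply]
    simp only [LinearMap.comp_apply, LinearEquiv.coe_coe, LinearEquiv.apply_symm_apply]
    rw [← map_augmentation_zero]
    exact (Tot.isHomotopy_homotopy P.isChainMap_augmentation P.isHomotopy_augmentation
      Q.isHomotopy_augmentation).d_h_zero _
  d_s_succ n x := (interchange V W κ.toLinearEquiv (n + 1)).injective <| by
    rw [interchange_tensorD, map_sub]
    simp only [LinearMap.comp_apply, LinearEquiv.coe_coe, LinearEquiv.apply_symm_apply,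
      interchange_tensorD]
    rw [(Tot.isHomotopy_homotopy P.isChainMap_augmentation P.isHomotopy_augmentation
      Q.isHomotopy_augmentation).d_h_succ, map_augmentation_succ, sub_zero]

end Tensor

section Induce

variable {X N N' : Type*} [AddCommGroup X] [Module R X] [Module Sᵐᵒᵖ X] [IsScalarTower R Sᵐᵒᵖ X]
  [AddCommGroup N] [Module R N] [Module S₁ᵐᵒᵖ N] [IsScalarTower R S₁ᵐᵒᵖ N]
  [AddCommGroup N'] [Module R N'] [Module S₂ᵐᵒᵖ N'] [IsScalarTower R S₂ᵐᵒᵖ N']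

lemma interchange_induce_tensorD (ν : X ≃ₗ[R] N ⊗[R] N')
    (hν : ∀ r r' x x',
      op (κ.symm (r ⊗ₜ r')) • ν.symm (x ⊗ₜ x') = ν.symm ((op r • x) ⊗ₜ (op r' • x')))
    (n : ℕ) (z : Chains R X (Tot R V W) (n + 1)) :
    interchange V W ν n (induce X (tensorD κ P Q n) z) =
      Tot.d (C := Chains R N V) (D := Chains R N' W) (fun n => induce N (P.d n))
        (fun n => induce N' (Q.d n)) n (interchange V W ν (n + 1) z) := by
  suffices (interchange V W ν n).toLinearMap ∘ₗ induce X (tensorD κ P Q n) =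
      Tot.d (C := Chains R N V) (D := Chains R N' W) (fun n => induce N (P.d n))
        (fun n => induce N' (Q.d n)) n ∘ₗ (interchange V W ν (n + 1)).toLinearMap from
    LinearMap.congr_fun this z
  refine hom_ext_symm_tmul ν fun x x' u => ?_
  have naturality (m : ℕ) := interchange_rTensor (V := V) (W := W) κ.toLinearEquiv ν
    (α := orbit R S X (ν.symm (x ⊗ₜ x'))) (β := orbit R S₁ N x) (β' := orbit R S₂ N' x')
    (fun r r' => hν r r' x x') m
  have generator : ν.symm (x ⊗ₜ x') ⊗ₜ u =
      (orbit R S X (ν.symm (x ⊗ₜ x'))).rTensor (Tot R V W (n + 1)) (1 ⊗ₜ u) := by simp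
  simp only [LinearMap.comp_apply, LinearEquiv.coe_coe]
  rw [induce_tmul, generator, naturality, naturality, interchange_tensorD]
  refine (Tot.isChainMap_map (fun n y => ?_) (fun n y => ?_) n _).symm
  · exact induce_rTensor_orbit N (P.d n) x y
  · exact induce_rTensor_orbit N' (Q.d n) x' y

end Induce

end FreeResolution

end TensorResolution

/-! ### The reduced bar resolution -/

section Bar

variable (A : Type u) [Ring A] [Algebra k A]

/-- The enveloping algebra `A ⊗ Aᵒᵖ`. It is a type synonym, so that `A ⊗ Aᵒᵖ` does not act on itself
through the action of `A ⊗ Aᵒᵖ` on the left factor `A`. -/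
def Env : Type u := A ⊗[k] Aᵐᵒᵖ

instance : Ring (Env k A) := inferInstanceAs (Ring (A ⊗[k] Aᵐᵒᵖ))

instance : Algebra k (Env k A) := inferInstanceAs (Algebra k (A ⊗[k] Aᵐᵒᵖ))

namespace Env

/-- The enveloping algebra as a tensor product of algebras. -/
def equivTensor : Env k A ≃ₐ[k] A ⊗[k] Aᵐᵒᵖ := AlgEquiv.refl

/-- The pure tensor `a ⊗ b` of the enveloping algebra, as a bilinear map. -/
def mk : A →ₗ[k] A →ₗ[k] Env k A :=
  ((TensorProduct.mk k A Aᵐᵒᵖ).compl₂ (opLinearEquiv k).toLinearMap).compr₂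
    (equivTensor k A).symm.toLinearMap

variable {k A}

lemma one_def : (1 : Env k A) = mk k A 1 1 := rfl

lemma mk_mul_mk (a b a' b' : A) : mk k A a b * mk k A a' b' = mk k A (a * a') (b' * b) :=
  Algebra.TensorProduct.tmul_mul_tmul a a' (op b) (op b')

lemma linearMap_ext {X : Type*} [AddCommGroup X] [Module k X] {f g : Env k A →ₗ[k] X}
    (h : ∀ a b, f (mk k A a b) = g (mk k A a b)) : f = g :=
  TensorProduct.ext' fun a b => h a b.unop

lemma tmul_ext {V X : Type*} [AddCommGroup V] [Module k V] [AddCommGroup X] [Module k X]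
    {f g : Env k A ⊗[k] V →ₗ[k] X}
    (h : ∀ a b v, f (mk k A a b ⊗ₜ v) = g (mk k A a b ⊗ₜ v)) : f = g :=
  TensorProduct.ext <| linearMap_ext fun a b => LinearMap.ext fun v => h a b v

end Env

/-- The generators `Ā^{⊗n}` of the reduced bar resolution. -/
abbrev BarGen (n : ℕ) : Type u := ⨂[k]^n (RedQuot k A)

/-- The identification `Ā ⊗ Ā^{⊗n} ≃ Ā^{⊗(n+1)}`. -/
def consEquiv (n : ℕ) : RedQuot k A ⊗[k] BarGen k A n ≃ₗ[k] BarGen k A (n + 1) :=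
  TensorProduct.congr (PiTensorProduct.subsingletonEquiv (R := k)
    (s := fun _ : Fin 1 => RedQuot k A) 0).symm (LinearEquiv.refl k _) ≪≫ₗ
  PiTensorProduct.tmulEquiv k (RedQuot k A) (ι := Fin 1) (ι₂ := Fin n) ≪≫ₗ
  PiTensorProduct.reindex k (fun _ => RedQuot k A)
    (finSumFinEquiv.trans (finCongr (Nat.add_comm 1 n)))

lemma consEquiv_tprod (n : ℕ) (x : RedQuot k A) (v : Fin n → RedQuot k A) :
    consEquiv k A n (x ⊗ₜ tprod k v) =
      tprod k (Fin.cons x v : Fin (n + 1) → RedQuot k A) := by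
  simp only [consEquiv, LinearEquiv.trans_apply, TensorProduct.congr_tmul,
    LinearEquiv.refl_apply, PiTensorProduct.subsingletonEquiv_symm_apply',
    PiTensorProduct.tmulEquiv_apply]
  refine (PiTensorProduct.reindex_tprod _ _).trans (congrArg _ (funext fun j => ?_))
  refine Fin.cases rfl (fun j => ?_) j
  have preimage_succ : (finSumFinEquiv.trans (finCongr (Nat.add_comm 1 n))).symm j.succ =
      Sum.inr j := by
    rw [Equiv.symm_apply_eq]
    ext
    simp
  rw [preimage_succ]
  rfl

variable {k A}

lemma redPr_surjective : Function.Surjective (redPr k A) := Submodule.mkQ_surjective _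

lemma redPr_one : redPr k A 1 = 0 :=
  (Submodule.Quotient.mk_eq_zero _).2 (Submodule.mem_span_singleton_self _)

variable (k A) in
lemma exists_redPr_rightInverse :
    ∃ σ : RedQuot k A →ₗ[k] A, redPr k A ∘ₗ σ = LinearMap.id :=
  (redPr k A).exists_rightInverse_of_surjective (LinearMap.range_eq_top.2 redPr_surjective)

variable (k A) in
/-- A linear section of `A → Ā`. -/
def redSection : RedQuot k A →ₗ[k] A := (exists_redPr_rightInverse k A).choose

lemma exists_redSection_redPr (a : A) : ∃ c : k, redSection k A (redPr k A a) = a + c • 1 := by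
  have same_class : redPr k A (redSection k A (redPr k A a)) = redPr k A a :=
    LinearMap.congr_fun (exists_redPr_rightInverse k A).choose_spec (redPr k A a)
  obtain ⟨c, hc⟩ := Submodule.mem_span_singleton.1 ((Submodule.Quotient.eq _).1 same_class)
  exact ⟨c, by rw [hc, add_sub_cancel]⟩

lemma barGen_hom_ext {X : Type*} [AddCommGroup X] [Module k X] {n : ℕ}
    {f g : BarGen k A (n + 1) →ₗ[k] X}
    (h : ∀ a v, f (consEquiv k A n (redPr k A a ⊗ₜ v)) = g (consEquiv k A n (redPr k A a ⊗ₜ v))) :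
    f = g := by
  suffices f ∘ₗ (consEquiv k A n).toLinearMap = g ∘ₗ (consEquiv k A n).toLinearMap from
    LinearMap.ext fun x => by
      simpa using LinearMap.congr_fun this ((consEquiv k A n).symm x)
  refine TensorProduct.ext' fun x v => ?_
  obtain ⟨a, rfl⟩ := redPr_surjective x
  exact h a v

instance : Module (Env k A) A :=
  Module.compHom A ((AlgHom.mulLeftRight k A).comp (Env.equivTensor k A).toAlgHom).toRingHom

lemma mk_smul (a b x : A) : Env.mk k A a b • x = a * x * b :=
  AlgHom.mulLeftRight_apply k A a (op b) x

instance : IsScalarTower k (Env k A) A where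
  smul_assoc c r x := map_smul (LinearMap.applyₗ x ∘ₗ (AlgHom.mulLeftRight k A).toLinearMap) c r

lemma barChains_hom_ext {M : Type*} [AddCommGroup M] [Module k M] [Module (Env k A) M]
    [IsScalarTower k (Env k A) M] {n : ℕ}
    {f g : Chains k (Env k A) (BarGen k A) (n + 1) →ₗ[Env k A] M}
    (h : ∀ a v, f (1 ⊗ₜ consEquiv k A n (redPr k A a ⊗ₜ v)) =
      g (1 ⊗ₜ consEquiv k A n (redPr k A a ⊗ₜ v))) : f = g := by
  refine free_hom_ext (R := k) (V := BarGen k A (n + 1)) fun v => ?_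
  suffices f.restrictScalars k ∘ₗ TensorProduct.mk k _ _ 1 =
      g.restrictScalars k ∘ₗ TensorProduct.mk k _ _ 1 from LinearMap.congr_fun this v
  exact barGen_hom_ext h

variable (k A) in
/-- The isomorphism `(A ⊗ Aᵒᵖ)ᵒᵖ ≃ A ⊗ Aᵒᵖ` interchanging the factors. -/
def envOp : (Env k A)ᵐᵒᵖ ≃ₐ[k] Env k A :=
  (Env.equivTensor k A).op.trans <| (Algebra.TensorProduct.opAlgEquiv k k A Aᵐᵒᵖ).symm.trans <|
    (Algebra.TensorProduct.congr AlgEquiv.refl (AlgEquiv.opOp k A).symm).trans <|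
      (Algebra.TensorProduct.comm k Aᵐᵒᵖ A).trans (Env.equivTensor k A).symm

instance : Module (Env k A)ᵐᵒᵖ A := Module.compHom A (envOp k A).toRingHom

lemma op_mk_smul (a b x : A) : op (Env.mk k A a b) • x = b * x * a := mk_smul b a x

instance : IsScalarTower k (Env k A)ᵐᵒᵖ A where
  smul_assoc c r x := (congrArg (· • x) (map_smul (envOp k A) c r)).trans (smul_assoc c _ x)

variable (k A) in
/-- The contraction `(a ⊗ b) ⊗ x ↦ (1 ⊗ b) ⊗ (ā ⊗ x)` of the reduced bar resolution. -/
def barContraction (n : ℕ) :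
    Chains k (Env k A) (BarGen k A) n →ₗ[k] Chains k (Env k A) (BarGen k A) (n + 1) :=
  TensorProduct.map (Env.mk k A 1 ∘ₗ (opLinearEquiv k).symm.toLinearMap)
    ((consEquiv k A n).toLinearMap ∘ₗ (redPr k A).rTensor _) ∘ₗ
  (TensorProduct.assoc k Aᵐᵒᵖ A _).toLinearMap ∘ₗ
  ((TensorProduct.comm k A Aᵐᵒᵖ).toLinearMap ∘ₗ (Env.equivTensor k A).toLinearMap).rTensor _

@[simp] lemma barContraction_tmul (n : ℕ) (a b : A) (x : BarGen k A n) :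
    barContraction k A n (Env.mk k A a b ⊗ₜ x) =
      Env.mk k A 1 b ⊗ₜ consEquiv k A n (redPr k A a ⊗ₜ x) := rfl

lemma barContraction_smul (n : ℕ) (b : A) (z : Chains k (Env k A) (BarGen k A) n) :
    barContraction k A n (Env.mk k A 1 b • z) =
      Env.mk k A 1 b • barContraction k A n z := by
  suffices barContraction k A n ∘ₗ Algebra.lsmul k k _ (Env.mk k A 1 b) =
      Algebra.lsmul k k _ (Env.mk k A 1 b) ∘ₗ barContraction k A n from
    LinearMap.congr_fun this z
  refine Env.tmul_ext (V := BarGen k A n) fun a b v => ?_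
  simp [TensorProduct.smul_tmul', Env.mk_mul_mk]

lemma barContraction_barContraction (n : ℕ) (z : Chains k (Env k A) (BarGen k A) n) :
    barContraction k A (n + 1) (barContraction k A n z) = 0 := by
  suffices barContraction k A (n + 1) ∘ₗ barContraction k A n = 0 from LinearMap.congr_fun this z
  refine Env.tmul_ext (V := BarGen k A n) fun a b v => ?_
  simp [redPr_one]

variable (k A) in
/-- The augmentation `(a ⊗ b) ↦ a b` of the reduced bar resolution. -/
def barAugmentation : Chains k (Env k A) (BarGen k A) 0 →ₗ[Env k A] A :=
  freeLift (V := BarGen k A 0) ((PiTensorProduct.isEmptyEquiv (Fin 0)).toLinearMap.smulRight 1)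

variable (k A) in
/-- The section `b ↦ 1 ⊗ b` of the augmentation of the reduced bar resolution. -/
def barUnit : A →ₗ[k] Chains k (Env k A) (BarGen k A) 0 :=
  (TensorProduct.mk k (Env k A) (BarGen k A 0)).flip
    ((PiTensorProduct.isEmptyEquiv (Fin 0)).symm 1) ∘ₗ Env.mk k A 1

lemma barAugmentation_barUnit (a : A) : barAugmentation k A (barUnit k A a) = a := by
  simp [barAugmentation, barUnit, mk_smul]

lemma barUnit_barAugmentation_tmul (a b : A) (x : BarGen k A 0) :
    barUnit k A (barAugmentation k A (Env.mk k A a b ⊗ₜ x)) = Env.mk k A 1 (a * b) ⊗ₜ x := by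
  obtain ⟨c, rfl⟩ := (PiTensorProduct.isEmptyEquiv (Fin 0)).symm.surjective x
  have augmentation : barAugmentation k A
      (Env.mk k A a b ⊗ₜ (PiTensorProduct.isEmptyEquiv (Fin 0)).symm c) = c • (a * b) := by
    simp [barAugmentation, mk_smul]
  rw [augmentation, map_smul, barUnit]
  simp [TensorProduct.smul_tmul']

/-- The differential `1 ⊗ (ā ⊗ x) ↦ (1 - e) ((a ⊗ 1) ⊗ x)` determined by the composite `e` of
contraction and differential one degree lower. -/
def barStep {n : ℕ}
    (e : Chains k (Env k A) (BarGen k A) n →ₗ[k] Chains k (Env k A) (BarGen k A) n) :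
    Chains k (Env k A) (BarGen k A) (n + 1) →ₗ[Env k A] Chains k (Env k A) (BarGen k A) n :=
  freeLift (V := BarGen k A (n + 1)) <| (LinearMap.id - e) ∘ₗ
    ((Env.mk k A).flip 1 ∘ₗ redSection k A).rTensor _ ∘ₗ
    (consEquiv k A n).symm.toLinearMap

variable (k A) in
/-- The composite `s d` of contraction and differential of the reduced bar resolution; in degree
`0`, where there is no differential, the composite of the augmentation and its section. -/
def barProj : ∀ n, Chains k (Env k A) (BarGen k A) n →ₗ[k] Chains k (Env k A) (BarGen k A) n
  | 0 => barUnit k A ∘ₗ (barAugmentation k A).restrictScalars k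
  | n + 1 => barContraction k A n ∘ₗ (barStep (barProj n)).restrictScalars k

variable (k A) in
/-- The differential of the reduced bar resolution. -/
def barD (n : ℕ) :
    Chains k (Env k A) (BarGen k A) (n + 1) →ₗ[Env k A] Chains k (Env k A) (BarGen k A) n :=
  barStep (barProj k A n)

lemma barProj_zero (z : Chains k (Env k A) (BarGen k A) 0) :
    barProj k A 0 z = barUnit k A (barAugmentation k A z) := rfl

lemma barProj_succ (n : ℕ) (z : Chains k (Env k A) (BarGen k A) (n + 1)) :
    barProj k A (n + 1) z = barContraction k A n (barD k A n z) := rfl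

lemma barContraction_barProj (n : ℕ) (z : Chains k (Env k A) (BarGen k A) n) :
    barContraction k A n (barProj k A n z) = 0 := by
  cases n with
  | zero => simp [barProj_zero, barUnit, redPr_one]
  | succ n => exact barContraction_barContraction n _

lemma barStep_cons {n : ℕ}
    {e : Chains k (Env k A) (BarGen k A) n →ₗ[k] Chains k (Env k A) (BarGen k A) n}
    (he : ∀ x, e (1 ⊗ₜ x) = 1 ⊗ₜ x) (a : A) (x : BarGen k A n) :
    barStep e (1 ⊗ₜ consEquiv k A n (redPr k A a ⊗ₜ x)) =
      Env.mk k A a 1 ⊗ₜ x - e (Env.mk k A a 1 ⊗ₜ x) := by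
  obtain ⟨c, hc⟩ := exists_redSection_redPr (k := k) a
  simp [barStep, hc, he, ← TensorProduct.smul_tmul', TensorProduct.add_tmul, ← Env.one_def]

-- Hence the differential does not depend on the section of `A → Ā`.
lemma barProj_one_tmul (n : ℕ) (x : BarGen k A n) :
    barProj k A n (1 ⊗ₜ x) = 1 ⊗ₜ x := by
  induction n with
  | zero =>
    rw [Env.one_def, barProj_zero, barUnit_barAugmentation_tmul, mul_one]
  | succ n ih =>
    suffices barProj k A (n + 1) ∘ₗ TensorProduct.mk k _ _ 1 = TensorProduct.mk k _ _ 1 from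
      LinearMap.congr_fun this x
    refine barGen_hom_ext fun a v => ?_
    simp only [LinearMap.comp_apply, TensorProduct.mk_apply, barProj_succ]
    rw [barD, barStep_cons ih, map_sub, barContraction_barProj, sub_zero]
    rfl

lemma barD_cons (n : ℕ) (a : A) (x : BarGen k A n) :
    barD k A n (1 ⊗ₜ consEquiv k A n (redPr k A a ⊗ₜ x)) =
      Env.mk k A a 1 ⊗ₜ x - barProj k A n (Env.mk k A a 1 ⊗ₜ x) :=
  barStep_cons (barProj_one_tmul n) a x

lemma barProj_smul (n : ℕ) (b : A) (z : Chains k (Env k A) (BarGen k A) n) :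
    barProj k A n (Env.mk k A 1 b • z) =
      Env.mk k A 1 b • barProj k A n z := by
  cases n with
  | zero =>
    rw [barProj_zero, barProj_zero, map_smul, mk_smul, one_mul]
    simp [barUnit, TensorProduct.smul_tmul', Env.mk_mul_mk]
  | succ n => rw [barProj_succ, barProj_succ, map_smul, barContraction_smul]

lemma barD_barContraction (n : ℕ) (z : Chains k (Env k A) (BarGen k A) n) :
    barD k A n (barContraction k A n z) = z - barProj k A n z := by
  suffices (barD k A n).restrictScalars k ∘ₗ barContraction k A n =
      LinearMap.id - barProj k A n from LinearMap.congr_fun this z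
  refine Env.tmul_ext (V := BarGen k A n) fun a b v => ?_
  have source : (Env.mk k A a b ⊗ₜ v : Chains k (Env k A) (BarGen k A) n) =
      Env.mk k A 1 b • Env.mk k A a 1 ⊗ₜ v := by simp [TensorProduct.smul_tmul', Env.mk_mul_mk]
  have target : (Env.mk k A 1 b ⊗ₜ consEquiv k A n (redPr k A a ⊗ₜ v) :
      Chains k (Env k A) (BarGen k A) (n + 1)) =
      Env.mk k A 1 b • 1 ⊗ₜ consEquiv k A n (redPr k A a ⊗ₜ v) := by
    simp [TensorProduct.smul_tmul']
  simp only [LinearMap.comp_apply, LinearMap.restrictScalars_apply, LinearMap.sub_apply,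
    LinearMap.id_apply, barContraction_tmul]
  rw [target, map_smul, barD_cons, source, barProj_smul, smul_sub]

lemma barAugmentation_barD (z : Chains k (Env k A) (BarGen k A) 1) :
    barAugmentation k A (barD k A 0 z) = 0 := by
  suffices barAugmentation k A ∘ₗ barD k A 0 = 0 from LinearMap.congr_fun this z
  refine barChains_hom_ext fun a v => ?_
  rw [LinearMap.comp_apply, barD_cons, map_sub, barProj_zero, barAugmentation_barUnit, sub_self]
  rfl

lemma barD_barD (n : ℕ) (z : Chains k (Env k A) (BarGen k A) (n + 2)) :
    barD k A n (barD k A (n + 1) z) = 0 := by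
  suffices barD k A n ∘ₗ barD k A (n + 1) = 0 from LinearMap.congr_fun this z
  refine barChains_hom_ext fun a v => ?_
  have proj_d (y : Chains k (Env k A) (BarGen k A) (n + 1)) : barProj k A n (barD k A n y) = 0 := by
    cases n with
    | zero => rw [barProj_zero, barAugmentation_barD, map_zero]
    | succ n => rw [barProj_succ, barD_barD n, map_zero]
  rw [LinearMap.comp_apply, barD_cons, map_sub, barProj_succ, barD_barContraction, proj_d,
    sub_zero, sub_self]
  rfl

variable (k A) in
/-- The reduced bar resolution of the bimodule `A`. -/
def barResolution : FreeResolution k (Env k A) (BarGen k A) A where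
  d := barD k A
  ε := barAugmentation k A
  s := barContraction k A
  η := barUnit k A
  d_d := barD_barD
  ε_d := barAugmentation_barD
  ε_η := barAugmentation_barUnit
  d_s_zero := barD_barContraction 0
  d_s_succ n := barD_barContraction (n + 1)

end Bar

/-! ### The Hochschild complex from the bar resolution -/

section Hochschild

variable {A : Type u} [Ring A] [Algebra k A]

/-- The class of `a₁ ⊗ ⋯ ⊗ aₙ` in `Ā^{⊗n}`. -/
def redTprod {n : ℕ} (a : Fin n → A) : BarGen k A n := tprod k fun j => redPr k A (a j)

/-- The tuple `(a₁, …, aᵢ aᵢ₊₁, …)`. -/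
def merge {n : ℕ} (a : Fin (n + 1) → A) (i j : Fin n) : A :=
  if (j : ℕ) < (i : ℕ) then a j.castSucc
  else if (j : ℕ) = (i : ℕ) then a i.castSucc * a i.succ
  else a j.succ

lemma consEquiv_redTprod {n : ℕ} (x : A) (a : Fin n → A) :
    consEquiv k A n (redPr k A x ⊗ₜ redTprod k a) =
      redTprod k (Fin.cons x a : Fin (n + 1) → A) := by
  rw [redTprod, consEquiv_tprod, redTprod]
  congr 1
  funext j
  exact Fin.cases rfl (fun _ => rfl) j

lemma redTprod_succ {n : ℕ} (a : Fin (n + 1) → A) :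
    redTprod k a = consEquiv k A n (redPr k A (a 0) ⊗ₜ redTprod k fun j => a j.succ) := by
  rw [consEquiv_redTprod]
  exact congrArg _ (Fin.cons_self_tail a).symm

lemma merge_zero {n : ℕ} (a : Fin (n + 2) → A) :
    merge a 0 = (Fin.cons (a 0 * a 1) fun j => a j.succ.succ : Fin (n + 1) → A) := by
  funext j
  refine Fin.cases ?_ (fun j => ?_) j <;> simp [merge]

lemma merge_succ {n : ℕ} (a : Fin (n + 2) → A) (i : Fin n) :
    merge a i.succ = (Fin.cons (a 0) (merge (fun j => a j.succ) i) : Fin (n + 1) → A) := by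
  funext j
  refine Fin.cases ?_ (fun j => ?_) j <;> simp [merge]

lemma barD_one_tmul_redTprod {n : ℕ} (a : Fin (n + 1) → A) :
    barD k A n (1 ⊗ₜ redTprod k a) =
      Env.mk k A (a 0) 1 ⊗ₜ redTprod k (fun j => a j.succ)
      + (∑ i : Fin n, ((-1 : k) ^ ((i : ℕ) + 1)) • ((1 : Env k A) ⊗ₜ[k] redTprod k (merge a i)))
      + ((-1 : k) ^ (n + 1)) •
        (Env.mk k A 1 (a (Fin.last n)) ⊗ₜ[k] redTprod k (fun j => a j.castSucc)) := by
  have neg_smul_chain (n : ℕ) (c : k) (z : Chains k (Env k A) (BarGen k A) n) :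
      (-c) • z = -(c • z) := neg_smul c z
  rw [redTprod_succ, barD_cons]
  induction n with
  | zero =>
    have tail_eq_init : (fun j : Fin 0 => a j.succ) = fun j => a j.castSucc :=
      Subsingleton.elim _ _
    rw [barProj_zero, barUnit_barAugmentation_tmul]
    simp [tail_eq_init, sub_eq_add_neg, neg_smul_chain]
  | succ n ih =>
    have d_tail := ih fun j => a j.succ
    rw [← barD_cons, ← redTprod_succ k (fun j : Fin (n + 1) => a j.succ)] at d_tail
    have head_smul : (Env.mk k A (a 0) 1 ⊗ₜ redTprod k (fun j => a j.succ) :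
        Chains k (Env k A) (BarGen k A) (n + 1)) =
        Env.mk k A (a 0) 1 • 1 ⊗ₜ redTprod k (fun j => a j.succ) := by
      simp [TensorProduct.smul_tmul']
    have cons_init : (Fin.cons (a 0) fun j : Fin n => a j.castSucc.succ : Fin (n + 1) → A) =
        fun j => a j.castSucc := by
      funext j
      exact Fin.cases rfl (fun _ => rfl) j
    have contract (x y : A) {v : Fin n → A} :
        barContraction k A n (Env.mk k A (a 0) 1 • Env.mk k A x y ⊗ₜ redTprod k v) =
          Env.mk k A 1 y ⊗ₜ redTprod k (Fin.cons (a 0 * x) v : Fin (n + 1) → A) := by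
      rw [TensorProduct.smul_tmul', smul_eq_mul, Env.mk_mul_mk, barContraction_tmul,
        consEquiv_redTprod, mul_one]
    rw [barProj_succ, head_smul, map_smul, d_tail, Fin.sum_univ_succ, Env.one_def]
    simp only [smul_add, Finset.smul_sum, smul_comm _ (_ : k), map_add, map_sum, map_smul, contract,
      mul_one, merge_zero, merge_succ, cons_init, Fin.succ_last,
      Fin.succ_zero_eq_one, Fin.val_succ, Fin.val_zero, pow_succ, pow_zero]
    simp only [neg_smul_chain, one_smul, mul_neg, mul_one, Finset.sum_neg_distrib, neg_neg]
    abel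

variable (A) in
/-- The Hochschild differential, obtained from the bar resolution by applying `A ⊗_{Aᵉ} -`. -/
def hochschildD (n : ℕ) : CRed k A (n + 1) →ₗ[k] CRed k A n :=
  induce (V := BarGen k A (n + 1)) (W := BarGen k A n) A (barD k A n)

lemma hochschildD_tmul (n : ℕ) (a : A) (x : BarGen k A (n + 1)) :
    hochschildD k A n (a ⊗ₜ x) =
      (orbit k (Env k A) A a).rTensor (BarGen k A n) (barD k A n (1 ⊗ₜ x)) := rfl

variable {k}

lemma hochschildD_hochschildD (n : ℕ) (z : CRed k A (n + 2)) :
    hochschildD k A n (hochschildD k A (n + 1) z) = 0 := by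
  have comp_zero : barD k A n ∘ₗ barD k A (n + 1) = 0 := LinearMap.ext (barD_barD n)
  rw [hochschildD, hochschildD, ← LinearMap.comp_apply, ← induce_comp, comp_zero, induce_zero,
    LinearMap.zero_apply]

lemma eq_hochschildD {b : ∀ n : ℕ, CRed k A (n + 1) →ₗ[k] CRed k A n}
    (hb : IsRedHochschildDiff k A b) : b = hochschildD k A := by
  refine funext fun n => TensorProduct.ext (LinearMap.ext fun x₀ => PiTensorProduct.ext
    (MultilinearMap.ext fun v => ?_))
  choose a ha using fun j => redPr_surjective (k := k) (A := A) (v j)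
  obtain rfl : (fun j => redPr k A (a j)) = v := funext ha
  refine (hb n x₀ a).trans (Eq.trans ?_ (hochschildD_tmul k n x₀ (redTprod k a)).symm)
  rw [barD_one_tmul_redTprod, Env.one_def]
  simp only [map_add, map_sum, map_smul, LinearMap.rTensor_tmul, orbit_apply, op_mk_smul, one_mul,
    mul_one]
  rfl

end Hochschild

/-! ### The Künneth formula -/

section TensorProductAlgebra

variable {k} {A B T : Type u} [Ring A] [Algebra k A] [Ring B] [Algebra k B] [Ring T] [Algebra k T]
  (μ : T ≃ₐ[k] A ⊗[k] B)

namespace Env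

/-- The enveloping algebra of a tensor product is the tensor product of the enveloping algebras. -/
def congrTensor : Env k T ≃ₐ[k] Env k A ⊗[k] Env k B :=
  (equivTensor k T).trans <|
  (Algebra.TensorProduct.congr μ
    (μ.op.trans (Algebra.TensorProduct.opAlgEquiv k k A B).symm)).trans <|
  (Algebra.TensorProduct.tensorTensorTensorComm k k k k A B Aᵐᵒᵖ Bᵐᵒᵖ).trans <|
  Algebra.TensorProduct.congr (equivTensor k A).symm (equivTensor k B).symm

lemma congrTensor_symm_tmul (a a' : A) (b b' : B) :
    (congrTensor μ).symm (mk k A a a' ⊗ₜ mk k B b b') =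
      mk k T (μ.symm (a ⊗ₜ b)) (μ.symm (a' ⊗ₜ b')) := rfl

@[elab_as_elim]
lemma induction_on {p : Env k A → Prop} (r : Env k A) (mk : ∀ a b, p (mk k A a b))
    (add : ∀ r s, p r → p s → p (r + s)) : p r :=
  TensorProduct.induction_on r (map_zero (Env.mk k A 0) ▸ mk 0 0 : p 0) (fun a b => mk a b.unop) add

end Env

lemma congrTensor_symm_smul (r : Env k A) (r' : Env k B) (a : A) (b : B) :
    (Env.congrTensor μ).symm (r ⊗ₜ r') • μ.symm (a ⊗ₜ b) = μ.symm ((r • a) ⊗ₜ (r' • b)) := by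
  induction r using Env.induction_on with
  | add r s hr hs => simp only [TensorProduct.add_tmul, map_add, add_smul, hr, hs]
  | mk x y =>
    induction r' using Env.induction_on with
    | add r s hr hs => simp only [TensorProduct.tmul_add, map_add, add_smul, hr, hs]
    | mk x' y' => simp only [Env.congrTensor_symm_tmul, mk_smul, ← map_mul,
        Algebra.TensorProduct.tmul_mul_tmul]

lemma op_congrTensor_symm_smul (r : Env k A) (r' : Env k B) (a : A) (b : B) :
    op ((Env.congrTensor μ).symm (r ⊗ₜ r')) • μ.symm (a ⊗ₜ b) =
      μ.symm ((op r • a) ⊗ₜ (op r' • b)) := by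
  induction r using Env.induction_on with
  | add r s hr hs => simp only [TensorProduct.add_tmul, map_add, op_add, add_smul, hr, hs]
  | mk x y =>
    induction r' using Env.induction_on with
    | add r s hr hs => simp only [TensorProduct.tmul_add, map_add, op_add, add_smul, hr, hs]
    | mk x' y' => simp only [Env.congrTensor_symm_tmul, op_mk_smul, ← map_mul,
        Algebra.TensorProduct.tmul_mul_tmul]

/-- The resolution of `T ≃ A ⊗ B` given by the tensor product of the bar resolutions of `A` and
`B`. -/
def tensorBarResolution : FreeResolution k (Env k T) (Tot k (BarGen k A) (BarGen k B)) T :=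
  (barResolution k A).tensor (Env.congrTensor μ) (barResolution k B) (ξ := μ.toLinearEquiv)
    (congrTensor_symm_smul μ)

/-- The Hochschild complex of `T` computed from the tensor product of the bar resolutions. -/
def hochschildHomotopyEquiv :
    HomotopyEquiv (D := Chains k T (Tot k (BarGen k A) (BarGen k B))) (hochschildD k T)
      fun n => induce T ((tensorBarResolution μ).d n) :=
  ((barResolution k T).homotopyEquiv (tensorBarResolution μ)).induced T

/-- Extension of scalars turns the tensor product of the bar resolutions of `A` and `B` into the
tensor product of their Hochschild complexes. -/
def inducedTensorHomotopyEquiv :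
    HomotopyEquiv (C := Chains k T (Tot k (BarGen k A) (BarGen k B)))
      (fun n => induce T ((tensorBarResolution μ).d n))
      (Tot.d (hochschildD k A) (hochschildD k B)) :=
  HomotopyEquiv.ofLinearEquiv (interchange (BarGen k A) (BarGen k B) μ.toLinearEquiv) fun n z =>
    ((barResolution k A).interchange_induce_tensorD (Env.congrTensor μ) (barResolution k B)
      μ.toLinearEquiv (op_congrTensor_symm_smul μ) n z).symm

theorem hochschild_kunneth (μ : T ≃ₐ[k] A ⊗[k] B) (n : ℕ) :
    Nonempty (homologyOf k (hochschildD k T) n ≃ₗ[k]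
      Tot k (homologyOf k (hochschildD k A)) (homologyOf k (hochschildD k B)) n) := by
  obtain ⟨e⟩ := kunneth (hochschildD_hochschildD (k := k) (A := A))
    (hochschildD_hochschildD (k := k) (A := B)) n
  exact ⟨(hochschildHomotopyEquiv μ).homologyEquiv n ≪≫ₗ
    (inducedTensorHomotopyEquiv μ).homologyEquiv n ≪≫ₗ e⟩

end TensorProductAlgebra

end

end HochschildKunneth

set_option synthInstance.maxHeartbeats 1000000 in
set_option maxHeartbeats 2000000 in
/-- **Künneth formula for Hochschild homology.**
Let `k` be a field and `A`, `B` unital associative `k`-algebras, and let `b_A`, `b_B`,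
`b_{A⊗B}` be the Hochschild differentials of the reduced Hochschild complexes of `A`, `B`
and of `A ⊗ₖ B` (with its componentwise multiplication).  Then for every `n ≥ 0` there
is an isomorphism of `k`-vector spaces
`HHₙ(A ⊗ₖ B) ≅ ⊕_{p+q=n} HH_p(A) ⊗ₖ HH_q(B)`. -/
theorem statement11 (A B : Type u) [Ring A] [Algebra k A] [Ring B] [Algebra k B]
    (bA : ∀ n : ℕ, CRed k A (n + 1) →ₗ[k] CRed k A n)
    (hbA : IsRedHochschildDiff k A bA)
    (bB : ∀ n : ℕ, CRed k B (n + 1) →ₗ[k] CRed k B n)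
    (hbB : IsRedHochschildDiff k B bB)
    (bT : ∀ n : ℕ, CRed k (A ⊗[k] B) (n + 1) →ₗ[k] CRed k (A ⊗[k] B) n)
    (hbT : IsRedHochschildDiff k (A ⊗[k] B) bT)
    (n : ℕ) :
    Nonempty ((homologyOf k bT n) ≃ₗ[k]
      DirectSum (Fin (n + 1))
        (fun p => (homologyOf k bA (p : ℕ)) ⊗[k] (homologyOf k bB (n - (p : ℕ))))) := by
  obtain rfl := HochschildKunneth.eq_hochschildD hbA
  obtain rfl := HochschildKunneth.eq_hochschildD hbB
  obtain rfl := HochschildKunneth.eq_hochschildD hbT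
  obtain ⟨e⟩ := HochschildKunneth.hochschild_kunneth (AlgEquiv.refl (R := k) (A₁ := A ⊗[k] B)) n
  exact ⟨e ≪≫ₗ HochschildKunneth.totEquivFin k _ _ n⟩
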